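/- arXiv:2602.19933 — 10 statements merged into one kernel-verified Lean document; each statement's English description precedes it below -/
import Mathlib

section
/- Let a signed digraph on N nodes with M edges contain a directed spanning tree. If the digraph contains a root node, then the rank of the signed in-incidence matrix E_{s⊙} equals N − 1; if the digraph contains no root node, then the rank of E_{s⊙} equals N. -/
open Matrix

/-- The signed incidence matrix of a signed digraph. -/
def Es {N M : ℕ} (head tail : Fin M → Fin N) (σ : Fin M → ℝ) : Matrix (Fin N) (Fin M) ℝ :=
  Matrix.of fun i k => if i = head k then 1 else if i = tail k then -σ k else 0

/-- The signed in-incidence matrix of a signed digraph. -/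
def Ein {N M : ℕ} (head tail : Fin M → Fin N) (σ : Fin M → ℝ) : Matrix (Fin N) (Fin M) ℝ :=
  Matrix.of fun i k => if i = tail k then -σ k else 0

/-- Node `b` is reachable from node `a`. -/
def Reaches {N M : ℕ} (head tail : Fin M → Fin N) : Fin N → Fin N → Prop :=
  Relation.ReflTransGen fun a b => ∃ k, head k = a ∧ tail k = b

/-- The digraph contains a directed spanning tree. -/
def HasSpanningTree {N M : ℕ} (head tail : Fin M → Fin N) : Prop :=
  ∃ r, ∀ b, Reaches head tail r b

/-- A root node: a node that is the tail of no edge. -/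
def IsRootNode {N M : ℕ} (tail : Fin M → Fin N) (i : Fin N) : Prop :=
  ∀ k, tail k ≠ i

theorem rank_Ein_eq {N M : ℕ} (head tail : Fin M → Fin N) (σ : Fin M → ℝ)
    (hσ : ∀ k, σ k = 1 ∨ σ k = -1) :
    (Ein head tail σ).rank = Nat.card (Set.range tail) := by
  classical
  have hcol : ∀ k, (Ein head tail σ).col k = (-σ k) • (Pi.single (tail k) (1 : ℝ) : Fin N → ℝ) := by
    intro k
    ext i
    simp [Ein, Matrix.col, Pi.single_apply]
  have hne : ∀ k, -σ k ≠ 0 := by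
    intro k
    rcases hσ k with h | h <;> rw [h] <;> norm_num
  have hspan : Submodule.span ℝ (Set.range (Ein head tail σ).col) =
      Submodule.span ℝ (Set.range fun i : Set.range tail =>
        (Pi.single (i : Fin N) (1 : ℝ) : Fin N → ℝ)) := by
    apply le_antisymm
    · rw [Submodule.span_le]
      rintro _ ⟨k, rfl⟩
      rw [hcol]
      exact Submodule.smul_mem _ _ (Submodule.subset_span ⟨⟨tail k, k, rfl⟩, rfl⟩)
    · rw [Submodule.span_le]
      rintro _ ⟨⟨_, k, rfl⟩, rfl⟩
      have h : (Ein head tail σ).col k ∈ Submodule.span ℝ (Set.range (Ein head tail σ).col) :=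
        Submodule.subset_span ⟨k, rfl⟩
      rw [hcol] at h
      exact (Submodule.smul_mem_iff _ (hne k)).1 h
  have hli : LinearIndependent ℝ (fun i : Set.range tail =>
        (Pi.single (i : Fin N) (1 : ℝ) : Fin N → ℝ)) :=
    (Pi.linearIndependent_single_one (Fin N) ℝ).comp _ Subtype.val_injective
  rw [Matrix.rank_eq_finrank_span_cols, hspan, finrank_span_eq_card hli, Nat.card_eq_fintype_card]

theorem rank_in_incidence_spanning_tree {N M : ℕ}
    (head tail : Fin M → Fin N) (σ : Fin M → ℝ)
    (hht : ∀ k, head k ≠ tail k)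
    (hinj : ∀ k k', head k = head k' → tail k = tail k' → k = k')
    (hσ : ∀ k, σ k = 1 ∨ σ k = -1)
    (hdss : ∀ k k', head k = tail k' → tail k = head k' → σ k = σ k')
    (htree : HasSpanningTree head tail) :
    ((∃ i, IsRootNode tail i) → (Ein head tail σ).rank = N - 1) ∧
    ((¬ ∃ i, IsRootNode tail i) → (Ein head tail σ).rank = N) := by
  rw [rank_Ein_eq head tail σ hσ]
  obtain ⟨r, hr⟩ := htree
  constructor
  · rintro ⟨i, hi⟩
    have huniq : ∀ j, IsRootNode tail j → j = r := by
      intro j hj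
      rcases Relation.ReflTransGen.cases_tail (hr j) with h | ⟨c, _, k, _, hk⟩
      · exact h
      · exact absurd hk (hj k)
    have hset : Set.range tail = {i}ᶜ := by
      ext j
      simp only [Set.mem_range, Set.mem_compl_iff, Set.mem_singleton_iff]
      constructor
      · rintro ⟨k, rfl⟩
        exact hi k
      · intro hj
        by_contra hn
        exact hj ((huniq j fun k hk => hn ⟨k, hk⟩).trans (huniq i hi).symm)
    rw [hset, Nat.card_coe_set_eq, Set.ncard_compl, Set.ncard_singleton, Nat.card_fin]
  · intro hn
    have hset : Set.range tail = Set.univ := by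
      ext j
      simp only [Set.mem_range, Set.mem_univ, iff_true]
      by_contra hj
      exact hn ⟨j, fun k hk => hj ⟨k, hk⟩⟩
    rw [hset, Nat.card_coe_set_eq, Set.ncard_univ, Nat.card_fin]
end

section
/- If a signed digraph is structurally balanced, then there exists a diagonal matrix D = diag(d) with d : Fin N → {1, −1} such that every off-diagonal entry of D L_s D is nonpositive. -/
open Matrix

/-- The signed Laplacian `L_s = E_{s⊙} E_sᵀ`. -/
def Ls {N M : ℕ} (head tail : Fin M → Fin N) (σ : Fin M → ℝ) : Matrix (Fin N) (Fin N) ℝ :=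
  Ein head tail σ * (Es head tail σ)ᵀ

/-- The signed edge Laplacian `L_{e_s} = E_sᵀ E_{s⊙}`. -/
def Les {N M : ℕ} (head tail : Fin M → Fin N) (σ : Fin M → ℝ) : Matrix (Fin M) (Fin M) ℝ :=
  (Es head tail σ)ᵀ * Ein head tail σ

/-- Structural balance of a signed digraph. -/
def StructBalanced {N M : ℕ} (head tail : Fin M → Fin N) (σ : Fin M → ℝ) : Prop :=
  ∃ d : Fin N → ℝ, (∀ i, d i = 1 ∨ d i = -1) ∧ ∀ k, d (head k) * d (tail k) = σ k


theorem gauge_transformation {N M : ℕ}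
    (head tail : Fin M → Fin N) (σ : Fin M → ℝ)
    (hht : ∀ k, head k ≠ tail k)
    (hinj : ∀ k k', head k = head k' → tail k = tail k' → k = k')
    (hσ : ∀ k, σ k = 1 ∨ σ k = -1)
    (hdss : ∀ k k', head k = tail k' → tail k = head k' → σ k = σ k')
    (hSB : StructBalanced head tail σ) :
    ∃ d : Fin N → ℝ, (∀ i, d i = 1 ∨ d i = -1) ∧
      ∀ i j, i ≠ j →
        (Matrix.diagonal d * Ls head tail σ * Matrix.diagonal d) i j ≤ 0 := by
  obtain ⟨d, hd, hdσ⟩ := hSB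
  refine ⟨d, hd, fun i j hij => ?_⟩
  rw [Matrix.mul_diagonal, Matrix.diagonal_mul, Ls, Matrix.mul_apply, Finset.mul_sum,
    Finset.sum_mul]
  refine Finset.sum_nonpos fun k _ => ?_
  simp only [Ein, Es, Matrix.transpose_apply, Matrix.of_apply]
  by_cases h1 : i = tail k
  · by_cases h2 : j = head k
    · have h := hdσ k
      rw [← h1, ← h2] at h
      rw [if_pos h1, if_pos h2, ← h]
      nlinarith [sq_nonneg (d j * d i)]
    · have h3 : j ≠ tail k := fun h => hij (h1.trans h.symm)
      simp [h2, h3]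
  · simp [h1]
end

section
/- For a structurally balanced signed digraph containing a directed spanning tree, 0 is a simple eigenvalue of the signed Laplacian L_s (i.e., 0 is a root of the characteristic polynomial of L_s of multiplicity exactly 1), and every nonzero complex eigenvalue of L_s has positive real part. -/
open Matrix

lemma lap_nonneg {N M : ℕ} (head tail : Fin M → Fin N) (u : Fin N → ℝ) (c : ℝ) (r : Fin N)
    (h : ∀ i, (∑ k, if tail k = i then u i - u (head k) else 0) = c) : 0 ≤ c := by
  haveI : Nonempty (Fin N) := ⟨r⟩
  obtain ⟨i, hi⟩ := Finite.exists_max u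
  rw [← h i]
  apply Finset.sum_nonneg
  intro k _
  split_ifs
  · linarith [hi (head k)]
  · exact le_rfl

lemma lap_le_root {N M : ℕ} (head tail : Fin M → Fin N) (u : Fin N → ℝ) (r : Fin N)
    (hr : ∀ b, Reaches head tail r b)
    (h : ∀ i, (∑ k, if tail k = i then u i - u (head k) else 0) = 0) (j : Fin N) :
    u j ≤ u r := by
  haveI : Nonempty (Fin N) := ⟨r⟩
  obtain ⟨i, hi⟩ := Finite.exists_max u
  suffices hs : u i ≤ u r from (hi j).trans hs
  have key : ∀ b, Reaches head tail r b → u i ≤ u b → u i ≤ u r := by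
    intro b hb
    induction hb with
    | refl => exact id
    | tail _ hab ih =>
      rename_i a b _
      intro hub
      apply ih
      obtain ⟨k, rfl, rfl⟩ := hab
      have h0 := (Finset.sum_eq_zero_iff_of_nonneg (fun k' _ => by
        split_ifs
        · linarith [hi (head k')]
        · exact le_rfl)).1 (h (tail k)) k (Finset.mem_univ k)
      rw [if_pos rfl] at h0
      linarith
  exact key i (hr i) le_rfl

lemma lap_const {N M : ℕ} (head tail : Fin M → Fin N) (y : Fin N → ℂ) (c : ℂ) (r : Fin N)
    (hr : ∀ b, Reaches head tail r b)
    (h : ∀ i, (∑ k, if tail k = i then y i - y (head k) else 0) = c) (j : Fin N) :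
    y j = y r := by
  have main : ∀ (f : ℂ →ₗ[ℝ] ℝ), f (y j) = f (y r) := by
    intro f
    have h1 : ∀ i, (∑ k, if tail k = i then f (y i) - f (y (head k)) else 0) = f c := by
      intro i
      rw [← h i, map_sum]
      refine Finset.sum_congr rfl fun k _ => ?_
      split_ifs <;> simp
    have h2 : ∀ i, (∑ k, if tail k = i then (-f (y i)) - (-f (y (head k))) else 0) = -f c := by
      intro i
      rw [← h1 i, ← Finset.sum_neg_distrib]
      refine Finset.sum_congr rfl fun k _ => ?_
      split_ifs
      · ring
      · simp
    have c1 := lap_nonneg head tail (fun i => f (y i)) _ r h1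
    have c2 := lap_nonneg head tail (fun i => -f (y i)) _ r h2
    have c0 : f c = 0 := by linarith
    rw [c0] at h1 h2
    rw [neg_zero] at h2
    have e1 := lap_le_root head tail (fun i => f (y i)) r hr h1 j
    have e2 := lap_le_root head tail (fun i => -f (y i)) r hr h2 j
    linarith
  exact Complex.ext (main Complex.reLm) (main Complex.imLm)

lemma lap_re_pos {N M : ℕ} (head tail : Fin M → Fin N) (y : Fin N → ℂ) (μ : ℂ) (hμ : μ ≠ 0)
    (hy : y ≠ 0)
    (h : ∀ i, (∑ k, if tail k = i then y i - y (head k) else 0) = μ * y i) : 0 < μ.re := by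
  obtain ⟨i0, hi0⟩ := Function.ne_iff.1 hy
  haveI : Nonempty (Fin N) := ⟨i0⟩
  obtain ⟨i, hi⟩ := Finite.exists_max fun i => Complex.normSq (y i)
  have hpos : 0 < Complex.normSq (y i) :=
    lt_of_lt_of_le (Complex.normSq_pos.2 hi0) (hi i0)
  have hsq : ∀ k, Complex.normSq (y i - y (head k)) ≤
      2 * ((y i - y (head k)) * (starRingEnd ℂ) (y i)).re := by
    intro k
    have := hi (head k)
    simp only [Complex.normSq_apply, Complex.mul_re, Complex.sub_re, Complex.sub_im,
      Complex.conj_re, Complex.conj_im] at this ⊢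
    nlinarith
  have hterm : ∀ k ∈ Finset.univ, 0 ≤
      (if tail k = i then ((y i - y (head k)) * (starRingEnd ℂ) (y i)).re else 0) := by
    intro k _
    split_ifs
    · linarith [hsq k, Complex.normSq_nonneg (y i - y (head k))]
    · exact le_rfl
  have hsum : (∑ k, if tail k = i then ((y i - y (head k)) * (starRingEnd ℂ) (y i)).re else 0)
      = μ.re * Complex.normSq (y i) := by
    have e : (μ * y i * (starRingEnd ℂ) (y i)).re = μ.re * Complex.normSq (y i) := by
      rw [mul_assoc, Complex.mul_conj, Complex.re_mul_ofReal]
    rw [← e, ← h i, Finset.sum_mul, Complex.re_sum]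
    refine Finset.sum_congr rfl fun k _ => ?_
    split_ifs <;> simp
  have hnn : 0 ≤ μ.re * Complex.normSq (y i) := hsum ▸ Finset.sum_nonneg hterm
  by_contra hcon
  have hz : μ.re * Complex.normSq (y i) = 0 := by nlinarith
  rw [hz] at hsum
  have h0 := (Finset.sum_eq_zero_iff_of_nonneg hterm).1 hsum
  have hL : μ * y i = 0 := by
    rw [← h i]
    refine Finset.sum_eq_zero fun k hk => ?_
    have h1 := h0 k hk
    split_ifs with ht
    · rw [if_pos ht] at h1
      have h2 := hsq k
      rw [h1] at h2
      exact Complex.normSq_eq_zero.1 (le_antisymm (by linarith) (Complex.normSq_nonneg _))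
    · rfl
  rcases mul_eq_zero.1 hL with h1 | h1
  · exact hμ h1
  · rw [h1] at hpos
    simp at hpos

lemma Ls_apply_gauge {N M : ℕ} (head tail : Fin M → Fin N) (σ : Fin M → ℝ)
    (hht : ∀ k, head k ≠ tail k) (d : Fin N → ℝ) (hd : ∀ i, d i = 1 ∨ d i = -1)
    (hdσ : ∀ k, d (head k) * d (tail k) = σ k) (x : Fin N → ℂ) (i : Fin N) :
    Matrix.toLin' ((Ls head tail σ).map ((↑) : ℝ → ℂ)) x i =
      d i * ∑ k, if tail k = i then d i * x i - d (head k) * x (head k) else 0 := by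
  have hEs : ∀ k, ∑ j, ((Es head tail σ j k : ℝ) : ℂ) * x j
      = x (head k) - σ k * x (tail k) := by
    intro k
    have : ∀ j, ((Es head tail σ j k : ℝ) : ℂ) * x j =
        (if j = head k then x j else 0) + (if j = tail k then -σ k * x j else 0) := by
      intro j
      simp only [Es, Matrix.of_apply]
      by_cases h1 : j = head k
      · have h2 : j ≠ tail k := fun h2 => hht k (h1.symm.trans h2)
        simp [h1, hht k]
      · by_cases h2 : j = tail k
        · simp [h2, (hht k).symm]
        · simp [h1, h2]
    simp only [this, Finset.sum_add_distrib, Finset.sum_ite_eq', Finset.sum_ite_eq,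
      Finset.mem_univ, if_true]
    ring
  have e1 : Matrix.toLin' ((Ls head tail σ).map ((↑) : ℝ → ℂ)) x i =
      ∑ k, ((Ein head tail σ i k : ℝ) : ℂ) * ∑ j, ((Es head tail σ j k : ℝ) : ℂ) * x j := by
    simp only [Matrix.toLin'_apply, Matrix.mulVec, dotProduct, Matrix.map_apply, Ls,
      Matrix.mul_apply, Matrix.transpose_apply, Complex.ofReal_sum, Complex.ofReal_mul,
      Finset.sum_mul, Finset.mul_sum]
    rw [Finset.sum_comm]
    simp only [mul_assoc]
  rw [e1, Finset.mul_sum]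
  refine Finset.sum_congr rfl fun k _ => ?_
  rw [hEs k]
  by_cases ht : tail k = i
  · subst ht
    rw [if_pos rfl, ← hdσ k]
    simp only [Ein, Matrix.of_apply, if_true, ← hdσ k]
    rcases hd (head k) with h1 | h1 <;> rcases hd (tail k) with h2 | h2 <;>
      rw [h1, h2] <;> push_cast <;> ring
  · simp [Ein, ht, Ne.symm ht]

theorem simple_zero_eigenvalue_SB_spanning_tree {N M : ℕ}
    (head tail : Fin M → Fin N) (σ : Fin M → ℝ)
    (hht : ∀ k, head k ≠ tail k)
    (hinj : ∀ k k', head k = head k' → tail k = tail k' → k = k')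
    (hσ : ∀ k, σ k = 1 ∨ σ k = -1)
    (hdss : ∀ k k', head k = tail k' → tail k = head k' → σ k = σ k')
    (hSB : StructBalanced head tail σ)
    (htree : HasSpanningTree head tail) :
    Polynomial.rootMultiplicity 0 (((Ls head tail σ).map ((↑) : ℝ → ℂ)).charpoly) = 1 ∧
    ∀ μ : ℂ, (((Ls head tail σ).map ((↑) : ℝ → ℂ)).charpoly).IsRoot μ → μ ≠ 0 → 0 < μ.re := by
  obtain ⟨d, hd, hdσ⟩ := hSB
  obtain ⟨r, hr⟩ := htree
  have hG := Ls_apply_gauge head tail σ hht d hd hdσ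
  have hdd : ∀ i, (d i : ℂ) * d i = 1 := by
    intro i
    rcases hd i with h | h <;> rw [h] <;> norm_num
  have hd0 : ∀ i, (d i : ℂ) ≠ 0 := fun i h => by simpa [h] using hdd i
  rw [← Matrix.charpoly_toLin']
  set φ := Matrix.toLin' ((Ls head tail σ).map ((↑) : ℝ → ℂ)) with hφ
  constructor
  · rw [← LinearMap.finrank_maxGenEigenspace_eq]
    have hker : φ (fun i => (d i : ℂ)) = 0 := by
      funext i
      rw [hG]
      simp [hdd]
    have hgen : ∀ n (x : Fin N → ℂ), (φ ^ n) x = 0 → ∃ c : ℂ, ∀ i, x i = c * d i := by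
      intro n
      induction n with
      | zero =>
        intro x hx
        refine ⟨0, fun i => ?_⟩
        have : x = 0 := by simpa using hx
        simp [this]
      | succ n ih =>
        intro x hx
        rw [pow_succ] at hx
        obtain ⟨c, hc⟩ := ih (φ x) hx
        refine ⟨d r * x r, fun i => ?_⟩
        have := lap_const head tail (fun i => d i * x i) c r hr (fun i => by
          have h1 := hc i
          rw [hG, mul_comm c] at h1
          exact mul_left_cancel₀ (hd0 i) h1) i
        rw [← this, mul_right_comm, hdd, one_mul]
    refine finrank_eq_one ⟨fun i => (d i : ℂ), ?_⟩ ?_ ?_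
    · rw [Module.End.mem_maxGenEigenspace]
      exact ⟨1, by simpa using hker⟩
    · intro h
      exact hd0 r (congrFun (congrArg Subtype.val h) r)
    · rintro ⟨w, hw⟩
      rw [Module.End.mem_maxGenEigenspace] at hw
      obtain ⟨n, hn⟩ := hw
      rw [zero_smul, sub_zero] at hn
      obtain ⟨c, hc⟩ := hgen n w hn
      refine ⟨c, Subtype.ext (funext fun i => ?_)⟩
      simp [hc i]
  · intro μ hroot hμ
    rw [← Module.End.hasEigenvalue_iff_isRoot_charpoly] at hroot
    obtain ⟨x, hx⟩ := hroot.exists_hasEigenvector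
    refine lap_re_pos head tail (fun i => d i * x i) μ hμ ?_ ?_
    · intro h
      apply hx.2
      funext i
      exact (mul_eq_zero.1 (congrFun h i)).resolve_left (hd0 i)
    · intro i
      have h1 := congrFun hx.apply_eq_smul i
      rw [hG] at h1
      apply mul_left_cancel₀ (hd0 i)
      rw [h1, Pi.smul_apply, smul_eq_mul, mul_left_comm μ, ← mul_assoc (d i : ℂ) (d i : ℂ), hdd, one_mul]
end

section
/- For a structurally balanced signed digraph on N nodes containing a directed spanning tree, the rank of the signed incidence matrix E_s equals N − 1. -/
open Matrix

theorem rank_incidence_SB_spanning_tree {N M : ℕ}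
    (head tail : Fin M → Fin N) (σ : Fin M → ℝ)
    (hht : ∀ k, head k ≠ tail k)
    (hinj : ∀ k k', head k = head k' → tail k = tail k' → k = k')
    (hσ : ∀ k, σ k = 1 ∨ σ k = -1)
    (hdss : ∀ k k', head k = tail k' → tail k = head k' → σ k = σ k')
    (hSB : StructBalanced head tail σ)
    (htree : HasSpanningTree head tail) :
    (Es head tail σ).rank = N - 1 := by
  obtain ⟨d, hd, hdk⟩ := hSB
  obtain ⟨r, hr⟩ := htree
  have hdd : ∀ i, d i * d i = 1 := by
    intro i
    rcases hd i with h | h <;> rw [h] <;> norm_num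
  have key : ∀ (x : Fin N → ℝ) (k : Fin M),
      ((Es head tail σ)ᵀ *ᵥ x) k = x (head k) - σ k * x (tail k) := by
    intro x k
    have h1 : ∀ i, (Es head tail σ)ᵀ k i * x i =
        (if i = head k then x i else 0) - (if i = tail k then σ k * x i else 0) := by
      intro i
      have := hht k
      simp only [Es, Matrix.transpose_apply, Matrix.of_apply]
      split_ifs with h2 h3
      · exact absurd (h2.symm.trans h3) this
      · ring
      · ring
      · ring
    simp only [Matrix.mulVec, dotProduct, h1, Finset.sum_sub_distrib]
    simp
  have hker : LinearMap.ker ((Es head tail σ)ᵀ.mulVecLin) = Submodule.span ℝ {d} := by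
    ext x
    rw [LinearMap.mem_ker, Submodule.mem_span_singleton, Matrix.mulVecLin_apply]
    constructor
    · intro hx
      refine ⟨d r * x r, ?_⟩
      have hreach : ∀ b, d b * x b = d r * x r := by
        intro b
        have hb := hr b
        unfold Reaches at hb
        induction hb with
        | refl => rfl
        | tail _ hab ih =>
          obtain ⟨k, rfl, rfl⟩ := hab
          have h1 := congrFun hx k
          rw [key, ← hdk k] at h1
          simp only [Pi.zero_apply] at h1
          rw [← ih]
          have h2 := hdd (head k)
          linear_combination (-d (tail k) * x (tail k)) * h2 - d (head k) * h1
      funext b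
      rw [Pi.smul_apply, smul_eq_mul, ← hreach b]
      linear_combination x b * hdd b
    · rintro ⟨c, rfl⟩
      funext k
      rw [key, ← hdk k]
      simp only [Pi.smul_apply, smul_eq_mul, Pi.zero_apply]
      linear_combination (-c * d (head k)) * hdd (tail k)
  have hd0 : d ≠ 0 := by
    intro h
    have := hdd r
    rw [h] at this
    simp at this
  have hrn := LinearMap.finrank_range_add_finrank_ker ((Es head tail σ)ᵀ.mulVecLin)
  rw [hker, finrank_span_singleton hd0, Module.finrank_fin_fun] at hrn
  rw [← Matrix.rank_transpose, Matrix.rank]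
  omega
end

section
/- For a structurally balanced signed digraph on N nodes containing a directed spanning tree, the rank of the signed Laplacian L_s and the rank of the signed edge Laplacian L_{e_s} are both equal to N − 1. -/
open Matrix

lemma aux_max {N M : ℕ} (head tail : Fin M → Fin N) (r : Fin N)
    (hr : ∀ b, Reaches head tail r b) (y : Fin N → ℝ)
    (h : ∀ i, ∑ k, (if i = tail k then y i - y (head k) else 0) = 0) :
    ∀ j, y j ≤ y r := by
  have : Nonempty (Fin N) := ⟨r⟩
  obtain ⟨i, hi⟩ := Finite.exists_max y
  have key : ∀ a b, Reaches head tail a b → y b = y i → y a = y i := by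
    intro a b hab
    induction hab with
    | refl => exact id
    | tail _ hbc ih =>
      rename_i b c
      obtain ⟨k, rfl, rfl⟩ := hbc
      intro hc
      apply ih
      have hz := (Finset.sum_eq_zero_iff_of_nonneg (by
        intro k' _
        split_ifs
        · have := hi (head k'); linarith
        · exact le_rfl)).1 (h (tail k)) k (Finset.mem_univ k)
      simp only [if_true] at hz
      linarith
  intro j
  rw [key r i (hr i) rfl]
  exact hi j

lemma aux_const {N M : ℕ} (head tail : Fin M → Fin N) (r : Fin N)
    (hr : ∀ b, Reaches head tail r b) (y : Fin N → ℝ)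
    (h : ∀ i, ∑ k, (if i = tail k then y i - y (head k) else 0) = 0) :
    ∀ j, y j = y r := by
  intro j
  apply le_antisymm (aux_max head tail r hr y h j)
  have := aux_max head tail r hr (fun i => - y i) (by
    intro i
    have h1 := h i
    rw [← neg_eq_zero, ← Finset.sum_neg_distrib] at h1
    refine Eq.trans ?_ h1
    refine Finset.sum_congr rfl fun k _ => ?_
    split_ifs <;> ring) j
  linarith

lemma aux_c {N M : ℕ} (head tail : Fin M → Fin N) (r : Fin N) (y : Fin N → ℝ) (c : ℝ)
    (h : ∀ i, ∑ k, (if i = tail k then y i - y (head k) else 0) = c) : c = 0 := by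
  have : Nonempty (Fin N) := ⟨r⟩
  obtain ⟨i, hi⟩ := Finite.exists_max y
  obtain ⟨j, hj⟩ := Finite.exists_min y
  apply le_antisymm
  · rw [← h j]
    apply Finset.sum_nonpos
    intro k _
    split_ifs
    · have := hj (head k); linarith
    · exact le_rfl
  · rw [← h i]
    apply Finset.sum_nonneg
    intro k _
    split_ifs
    · have := hi (head k); linarith
    · exact le_rfl

lemma aux_EsT {N M : ℕ} (head tail : Fin M → Fin N) (σ : Fin M → ℝ)
    (hht : ∀ k, head k ≠ tail k) (x : Fin N → ℝ) (k : Fin M) :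
    ((Es head tail σ)ᵀ *ᵥ x) k = x (head k) - σ k * x (tail k) := by
  have : ∀ i, (Es head tail σ)ᵀ k i * x i =
      (if i = head k then x i else 0) + (if i = tail k then - σ k * x i else 0) := by
    intro i
    simp only [Es, Matrix.transpose_apply, Matrix.of_apply]
    by_cases h1 : i = head k
    · have h2 : i ≠ tail k := by rw [h1]; exact hht k
      simp [h1, hht k]
    · by_cases h2 : i = tail k 
      · simp [h2, (hht k).symm]
      · simp [h1, h2]
  simp only [Matrix.mulVec, dotProduct, this, Finset.sum_add_distrib]
  simp
  ring

lemma aux_Ls {N M : ℕ} (head tail : Fin M → Fin N) (σ : Fin M → ℝ)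
    (hht : ∀ k, head k ≠ tail k) (d : Fin N → ℝ) (hd : ∀ i, d i = 1 ∨ d i = -1)
    (hs : ∀ k, d (head k) * d (tail k) = σ k) (x : Fin N → ℝ) (i : Fin N) :
    d i * (Ls head tail σ *ᵥ x) i =
      ∑ k, (if i = tail k then d i * x i - d (head k) * x (head k) else 0) := by
  rw [Ls, ← Matrix.mulVec_mulVec]
  rw [Matrix.mulVec, dotProduct, Finset.mul_sum]
  refine Finset.sum_congr rfl fun k _ => ?_
  rw [aux_EsT head tail σ hht]
  simp only [Ein, Matrix.of_apply]
  split_ifs with h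
  · subst h
    rw [← hs k]
    rcases hd (head k) with h1 | h1 <;> rcases hd (tail k) with h2 | h2 <;>
      rw [h1, h2] <;> ring
  · ring

lemma aux_sq {N : ℕ} (d : Fin N → ℝ) (hd : ∀ i, d i = 1 ∨ d i = -1) (i : Fin N) :
    d i * d i = 1 := by
  rcases hd i with h | h <;> rw [h] <;> norm_num

theorem rank_laplacians_SB_spanning_tree {N M : ℕ}
    (head tail : Fin M → Fin N) (σ : Fin M → ℝ)
    (hht : ∀ k, head k ≠ tail k)
    (hinj : ∀ k k', head k = head k' → tail k = tail k' → k = k')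
    (hσ : ∀ k, σ k = 1 ∨ σ k = -1)
    (hdss : ∀ k k', head k = tail k' → tail k = head k' → σ k = σ k')
    (hSB : StructBalanced head tail σ)
    (htree : HasSpanningTree head tail) :
    (Ls head tail σ).rank = N - 1 ∧ (Les head tail σ).rank = N - 1 := by
  obtain ⟨d, hd, hs⟩ := hSB
  obtain ⟨r, hr⟩ := htree
  have hsq := aux_sq d hd
  have hdne : d ≠ 0 := by
    intro h0
    have := hsq r
    simp [h0] at this
  -- upper bound
  have hup : ((Es head tail σ)ᵀ).rank ≤ N - 1 := by
    have hrn := LinearMap.finrank_range_add_finrank_ker ((Es head tail σ)ᵀ).mulVecLin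
    have hmem : d ∈ LinearMap.ker ((Es head tail σ)ᵀ).mulVecLin := by
      rw [LinearMap.mem_ker, Matrix.mulVecLin_apply]
      funext k
      rw [aux_EsT head tail σ hht, ← hs k, mul_assoc, hsq]
      simp
    have hpos : 0 < Module.finrank ℝ (LinearMap.ker ((Es head tail σ)ᵀ).mulVecLin) := by
      rw [Module.finrank_pos_iff_exists_ne_zero]
      exact ⟨⟨d, hmem⟩, fun h => hdne (congrArg Subtype.val h)⟩
    rw [Module.finrank_fin_fun] at hrn
    unfold Matrix.rank
    omega
  -- lower bound
  have hlow : N - 1 ≤ (Ls head tail σ * Ls head tail σ).rank := by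
    have hrn := LinearMap.finrank_range_add_finrank_ker
      (Ls head tail σ * Ls head tail σ).mulVecLin
    have hker : ∀ x, Ls head tail σ *ᵥ x = 0 → ∃ c : ℝ, x = c • d := by
      intro x hx
      refine ⟨d r * x r, ?_⟩
      have := aux_const head tail r hr (fun i => d i * x i) (by
        intro i
        rw [← aux_Ls head tail σ hht d hd hs x i, hx]
        simp)
      funext i
      have h2 : d i * x i = d r * x r := this i
      simp only [Pi.smul_apply, smul_eq_mul]
      rw [← h2, mul_right_comm, hsq, one_mul]
    have hle : LinearMap.ker (Ls head tail σ * Ls head tail σ).mulVecLin ≤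
        Submodule.span ℝ {d} := by
      intro x hx
      rw [LinearMap.mem_ker, Matrix.mulVecLin_apply, ← Matrix.mulVec_mulVec] at hx
      obtain ⟨c, hc⟩ := hker _ hx
      have hc0 : c = 0 := aux_c head tail r (fun i => d i * x i) c (by
        intro i
        rw [← aux_Ls head tail σ hht d hd hs x i, hc]
        simp only [Pi.smul_apply, smul_eq_mul]
        rw [mul_left_comm, hsq, mul_one])
      rw [hc0, zero_smul] at hc
      obtain ⟨c', hc'⟩ := hker _ hc
      exact Submodule.mem_span_singleton.2 ⟨c', hc'.symm⟩
    have h1 := Submodule.finrank_mono hle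
    rw [finrank_span_singleton hdne] at h1
    rw [Module.finrank_fin_fun] at hrn
    unfold Matrix.rank
    omega
  refine ⟨le_antisymm ?_ ?_, le_antisymm ?_ ?_⟩
  · exact (Matrix.rank_mul_le_right _ _).trans hup
  · exact hlow.trans (Matrix.rank_mul_le_right _ _)
  · exact (Matrix.rank_mul_le_left _ _).trans hup
  · refine hlow.trans ?_
    have : Ls head tail σ * Ls head tail σ =
        Ein head tail σ * (Les head tail σ * (Es head tail σ)ᵀ) := by
      simp only [Ls, Les, Matrix.mul_assoc]
    rw [this]
    exact (Matrix.rank_mul_le_right _ _).trans (Matrix.rank_mul_le_left _ _)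
end

section
/- Let a signed digraph be structurally unbalanced and contain a directed spanning tree. Then N − 1 = rank(L_s) < rank(L_{e_s}) = N holds if and only if the digraph contains an SB-rooted SCC. -/
open Matrix

/-- A rooted strongly connected component. -/
def IsRootedSCC {N M : ℕ} (head tail : Fin M → Fin N) (S : Finset (Fin N)) : Prop :=
  2 ≤ S.card ∧ (∀ k, tail k ∈ S → head k ∈ S) ∧
    ∀ a ∈ S, ∀ b ∈ S, Reaches head tail a b

/-- Structural balance of a rooted SCC. -/
def SCCBalanced {N M : ℕ} (head tail : Fin M → Fin N) (σ : Fin M → ℝ)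
    (S : Finset (Fin N)) : Prop :=
  ∃ d : Fin N → ℝ, (∀ i ∈ S, d i = 1 ∨ d i = -1) ∧
    ∀ k, head k ∈ S → tail k ∈ S → d (head k) * d (tail k) = σ k

section Helpers

variable {N M : ℕ} {head tail : Fin M → Fin N} {σ : Fin M → ℝ}

theorem EsT_mulVec (hht : ∀ k, head k ≠ tail k) (x : Fin N → ℝ) (k : Fin M) :
    ((Es head tail σ)ᵀ *ᵥ x) k = x (head k) - σ k * x (tail k) := by
  have h : ∀ i, (Es head tail σ)ᵀ k i * x i =
      (if i = head k then x i else 0) - (if i = tail k then σ k * x i else 0) := by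
    intro i
    simp only [Es, Matrix.transpose_apply, Matrix.of_apply]
    by_cases h1 : i = head k
    · have h2 : i ≠ tail k := fun h => hht k (h1 ▸ h)
      simp [h1, hht k]
    · by_cases h2 : i = tail k
      · simp [h2, (hht k).symm]
      · simp [h1, h2]
  simp only [Matrix.mulVec, dotProduct, h, Finset.sum_sub_distrib]
  simp

theorem Ls_mulVec (hht : ∀ k, head k ≠ tail k) (hσ : ∀ k, σ k = 1 ∨ σ k = -1)
    (x : Fin N → ℝ) (i : Fin N) :
    (Ls head tail σ *ᵥ x) i = ∑ k, if i = tail k then x i - σ k * x (head k) else 0 := by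
  rw [Ls, ← Matrix.mulVec_mulVec]
  have : (Ein head tail σ *ᵥ ((Es head tail σ)ᵀ *ᵥ x)) i =
    ∑ k, Ein head tail σ i k * ((Es head tail σ)ᵀ *ᵥ x) k := rfl
  rw [this]
  refine Finset.sum_congr rfl fun k _ => ?_
  rw [EsT_mulVec hht]
  simp only [Ein, Matrix.of_apply]
  split_ifs with h
  · subst h
    rcases hσ k with h | h <;> rw [h] <;> ring
  · simp

theorem EinT_mulVec (x : Fin N → ℝ) (k : Fin M) :
    ((Ein head tail σ)ᵀ *ᵥ x) k = - σ k * x (tail k) := by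
  simp [Ein, Matrix.mulVec, dotProduct, Matrix.transpose_apply]

theorem closed_reaches {P : Fin N → Prop} (hP : ∀ k, P (tail k) → P (head k))
    {a b : Fin N} (h : Reaches head tail a b) (hb : P b) : P a := by
  induction h with
  | refl => exact hb
  | tail _ h2 ih =>
    obtain ⟨k, rfl, rfl⟩ := h2
    exact ih (hP k hb)

theorem max_principle (hht : ∀ k, head k ≠ tail k) (hσ : ∀ k, σ k = 1 ∨ σ k = -1)
    {x : Fin N → ℝ} (hx : Ls head tail σ *ᵥ x = 0) (hx0 : x ≠ 0) :
    ∃ m > 0, (∃ i, |x i| = m) ∧ (∀ k, |x (tail k)| = m → x (tail k) = σ k * x (head k)) ∧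
      (∀ k, |x (tail k)| = m → |x (head k)| = m) := by
  obtain ⟨j, hj⟩ := Function.ne_iff.mp hx0
  have hj : x j ≠ 0 := hj
  obtain ⟨i, -, hi⟩ := Finset.exists_max_image Finset.univ (fun i => |x i|) ⟨j, Finset.mem_univ j⟩
  have hpos : 0 < |x i| := (abs_pos.mpr hj).trans_le (hi j (Finset.mem_univ j))
  have key : ∀ k, |x (tail k)| = |x i| → x (tail k) = σ k * x (head k) := by
    intro k hk
    have h0 := Ls_mulVec hht hσ x (tail k)
    rw [hx] at h0
    have h1 : ∑ k', (if tail k = tail k' then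
        x (tail k) * (x (tail k) - σ k' * x (head k')) else 0) = 0 := by
      have : (0:ℝ) = x (tail k) * 0 := by ring
      rw [this]
      change _ = x (tail k) * (0 : Fin N → ℝ) (tail k)
      rw [h0, Finset.mul_sum]
      refine Finset.sum_congr rfl fun k' _ => ?_
      split_ifs <;> simp
    rw [Finset.sum_eq_zero_iff_of_nonneg] at h1
    · have h2 := h1 k (Finset.mem_univ k)
      rw [if_pos rfl, mul_eq_zero] at h2
      rcases h2 with h2 | h2
      · rw [h2, abs_zero] at hk; exact absurd hk hpos.ne
      · linarith
    · intro k' _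
      split_ifs with h
      · have h3 : |x (head k')| ≤ |x (tail k)| := hk ▸ hi _ (Finset.mem_univ _)
        have h4 : |x (tail k) * (σ k' * x (head k'))| ≤ |x (tail k)| * |x (tail k)| := by
          have : |σ k'| = 1 := by rcases hσ k' with h | h <;> simp [h]
          rw [abs_mul, abs_mul, this, one_mul]
          exact mul_le_mul_of_nonneg_left h3 (abs_nonneg _)
        have h5 := le_abs_self (x (tail k) * (σ k' * x (head k')))
        rw [abs_mul_abs_self] at h4
        rw [mul_sub]; linarith
      · exact le_rfl
  refine ⟨|x i|, hpos, ⟨i, rfl⟩, key, ?_⟩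
  intro k hk
  have h := key k hk
  have h1 : |σ k| = 1 := by rcases hσ k with h | h <;> simp [h]
  rw [← hk, h, abs_mul, h1, one_mul]

theorem rank_add_ker {m n : ℕ} (A : Matrix (Fin m) (Fin n) ℝ) :
    A.rank + Module.finrank ℝ (LinearMap.ker A.mulVecLin) = n := by
  have := A.mulVecLin.finrank_range_add_finrank_ker
  simpa [Matrix.rank] using this

theorem rank_full_iff {m n : ℕ} (A : Matrix (Fin m) (Fin n) ℝ) :
    A.rank = n ↔ ∀ x, A *ᵥ x = 0 → x = 0 := by
  have h := rank_add_ker A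
  have h1 : A.rank = n ↔ Module.finrank ℝ (LinearMap.ker A.mulVecLin) = 0 := by omega
  rw [h1, Submodule.finrank_eq_zero, LinearMap.ker_eq_bot']
  rfl

theorem Ein_rank_iff (hσ : ∀ k, σ k = 1 ∨ σ k = -1) :
    (Ein head tail σ).rank = N ↔ ∀ i, ∃ k, tail k = i := by
  rw [← Matrix.rank_transpose, rank_full_iff]
  constructor
  · intro h i
    by_contra! hc
    have := h (Pi.single i 1) (by
      ext k
      rw [EinT_mulVec]
      simp [Pi.single_apply, hc k])
    have := congrFun this i
    simp at this
  · intro h x hx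
    ext i
    obtain ⟨k, rfl⟩ := h i
    have := congrFun hx k
    rw [EinT_mulVec] at this
    rcases hσ k with h | h <;> simpa [h] using this

theorem EsT_inj (hht : ∀ k, head k ≠ tail k) (hσ : ∀ k, σ k = 1 ∨ σ k = -1)
    (hSUB : ¬ StructBalanced head tail σ) (htree : HasSpanningTree head tail)
    (x : Fin N → ℝ) (hx : (Es head tail σ)ᵀ *ᵥ x = 0) : x = 0 := by
  by_contra hx0
  apply hSUB
  obtain ⟨r, hr⟩ := htree
  have he : ∀ k, x (head k) = σ k * x (tail k) := by
    intro k
    have := congrFun hx k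
    rw [EsT_mulVec hht] at this
    simp at this
    linarith
  have ha : ∀ k, |x (head k)| = |x (tail k)| := by
    intro k
    rw [he]
    rcases hσ k with h | h <;> simp [h]
  have hall : ∀ i, |x i| = |x r| := fun i =>
    (closed_reaches (P := fun a => |x a| = |x i|) (fun k hk => (ha k).trans hk) (hr i) rfl).symm
  have hr0 : |x r| ≠ 0 := by
    intro h
    apply hx0
    ext i
    have := hall i
    rw [h] at this
    simpa using this
  refine ⟨fun i => x i / |x r|, ?_, ?_⟩
  · intro i
    change x i / |x r| = 1 ∨ x i / |x r| = -1
    have hi := hall i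
    rw [← hi] at hr0 ⊢
    rcases abs_choice (x i) with h | h
    · left; rw [h] at hr0 ⊢; exact div_self hr0
    · right
      rw [h] at hr0 ⊢
      rw [div_neg, div_self (by simpa using hr0)]
  · intro k
    change x (head k) / |x r| * (x (tail k) / |x r|) = σ k
    rw [div_mul_div_comm, he, ← hall (tail k), abs_mul_abs_self, mul_assoc]
    apply mul_div_cancel_right₀
    have : x (tail k) ≠ 0 := by
      rw [← hall (tail k)] at hr0
      simpa using hr0
    exact mul_ne_zero this this

theorem Les_rank (hht : ∀ k, head k ≠ tail k) (hσ : ∀ k, σ k = 1 ∨ σ k = -1)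
    (hSUB : ¬ StructBalanced head tail σ) (htree : HasSpanningTree head tail) :
    (Les head tail σ).rank = (Ein head tail σ).rank := by
  have hinj := EsT_inj hht hσ hSUB htree
  have h1 := rank_add_ker (Les head tail σ)
  have h2 := rank_add_ker (Ein head tail σ)
  have : LinearMap.ker (Les head tail σ).mulVecLin = LinearMap.ker (Ein head tail σ).mulVecLin := by
    ext v
    simp only [LinearMap.mem_ker, Matrix.mulVecLin_apply, Les, ← Matrix.mulVec_mulVec]
    constructor
    · exact hinj _
    · intro h; rw [h]; simp
  rw [this] at h1
  omega

theorem Ls_rank_lt (hht : ∀ k, head k ≠ tail k) (hσ : ∀ k, σ k = 1 ∨ σ k = -1)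
    {S : Finset (Fin N)} (hS : IsRootedSCC head tail S) (hB : SCCBalanced head tail σ S) :
    (Ls head tail σ).rank ≠ N := by
  intro hrank
  rw [rank_full_iff] at hrank
  obtain ⟨d, hd, hdk⟩ := hB
  obtain ⟨hc, hcl, -⟩ := hS
  let V : Submodule ℝ (Fin N → ℝ) :=
    { carrier := {x | ∀ i ∈ S, x i = 0}
      add_mem' := by intro a b ha hb i hi; simp [ha i hi, hb i hi]
      zero_mem' := by intro i _; rfl
      smul_mem' := by intro c a ha i hi; simp [ha i hi] }
  let f := (Ls head tail σ).mulVecLin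
  have hinj : Function.Injective f := by
    rw [← LinearMap.ker_eq_bot, LinearMap.ker_eq_bot']
    exact hrank
  have hle : V.map f ≤ V := by
    rintro _ ⟨x, hx, rfl⟩ i hi
    change (Ls head tail σ *ᵥ x) i = 0
    rw [Ls_mulVec hht hσ]
    refine Finset.sum_eq_zero fun k _ => ?_
    split_ifs with h
    · have hh : head k ∈ S := hcl k (h ▸ hi)
      rw [hx i hi, hx _ hh]; ring
    · rfl
  have heq : V.map f = V := Submodule.eq_of_le_of_finrank_eq hle
    (LinearEquiv.finrank_eq (Submodule.equivMapOfInjective f hinj V)).symm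
  let x : Fin N → ℝ := fun i => if i ∈ S then d i else 0
  have hx : f x ∈ V := by
    intro i hi
    change (Ls head tail σ *ᵥ x) i = 0
    rw [Ls_mulVec hht hσ]
    refine Finset.sum_eq_zero fun k _ => ?_
    split_ifs with h
    · subst h
      have hh : head k ∈ S := hcl k hi
      simp only [x, hi, hh, if_true]
      rw [← hdk k hh hi]
      rcases hd _ hh with h | h <;> rw [h] <;> ring
    · rfl
  rw [← heq] at hx
  obtain ⟨y, hy, hyx⟩ := hx
  have hxy := hinj hyx
  obtain ⟨i, hi⟩ : S.Nonempty := Finset.card_pos.mp (by omega)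
  have h1 : y i = 0 := hy i hi
  rw [hxy] at h1
  simp only [x, hi, if_true] at h1
  rcases hd i hi with h | h <;> rw [h] at h1 <;> norm_num at h1

theorem Ls_rank_ge (hht : ∀ k, head k ≠ tail k) (hσ : ∀ k, σ k = 1 ∨ σ k = -1)
    (htree : HasSpanningTree head tail) : N ≤ (Ls head tail σ).rank + 1 := by
  obtain ⟨r, hr⟩ := htree
  have h := rank_add_ker (Ls head tail σ)
  let g : LinearMap.ker (Ls head tail σ).mulVecLin →ₗ[ℝ] ℝ :=
    (LinearMap.proj r).comp (Submodule.subtype _)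
  have hg : Function.Injective g := by
    rw [← LinearMap.ker_eq_bot, LinearMap.ker_eq_bot']
    rintro ⟨x, hx⟩ hxr
    have hxr : x r = 0 := hxr
    have hx : Ls head tail σ *ᵥ x = 0 := hx
    by_contra hne
    have hx0 : x ≠ 0 := fun h => hne (by ext1; exact h)
    obtain ⟨m, hm, ⟨i, hi⟩, -, hcl⟩ := max_principle hht hσ hx hx0
    have := closed_reaches (P := fun a => |x a| = m) hcl (hr i) hi
    simp only [hxr, abs_zero] at this
    exact hm.ne this
  have := LinearMap.finrank_le_finrank_of_injective hg
  rw [Module.finrank_self] at this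
  omega

end Helpers

theorem rank_gap_iff_SB_rooted_SCC {N M : ℕ}
    (head tail : Fin M → Fin N) (σ : Fin M → ℝ)
    (hht : ∀ k, head k ≠ tail k)
    (hinj : ∀ k k', head k = head k' → tail k = tail k' → k = k')
    (hσ : ∀ k, σ k = 1 ∨ σ k = -1)
    (hdss : ∀ k k', head k = tail k' → tail k = head k' → σ k = σ k')
    (hSUB : ¬ StructBalanced head tail σ)
    (htree : HasSpanningTree head tail) :
    ((Ls head tail σ).rank = N - 1 ∧
     (Ls head tail σ).rank < (Les head tail σ).rank ∧
     (Les head tail σ).rank = N) ↔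
    ∃ S, IsRootedSCC head tail S ∧ SCCBalanced head tail σ S := by
  classical
  have hLes := Les_rank hht hσ hSUB htree
  have hEin := Ein_rank_iff (head := head) (tail := tail) hσ
  have hge := Ls_rank_ge hht hσ htree
  obtain ⟨r, hr⟩ := htree
  constructor
  · rintro ⟨-, h2, h3⟩
    have hin := hEin.mp (hLes ▸ h3)
    have hne : (Ls head tail σ).rank ≠ N := by omega
    rw [Ne, rank_full_iff] at hne
    push Not at hne
    obtain ⟨x, hx, hx0⟩ := hne
    obtain ⟨m, hm, ⟨i, hi⟩, hk, hcl⟩ := max_principle hht hσ hx hx0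
    have hrm : |x r| = m := closed_reaches (P := fun a => |x a| = m) hcl (hr i) hi
    have hSm : ∀ a, Reaches head tail a r → |x a| = m := fun a ha =>
      closed_reaches (P := fun a => |x a| = m) hcl ha hrm
    refine ⟨Finset.univ.filter fun a => Reaches head tail a r, ⟨?_, ?_, ?_⟩,
      fun i => x i / m, ?_, ?_⟩
    · obtain ⟨k, hkr⟩ := hin r
      apply Nat.succ_le_of_lt
      rw [Finset.one_lt_card]
      refine ⟨head k, ?_, r, ?_, hkr ▸ hht k⟩
      · simp only [Finset.mem_filter, Finset.mem_univ, true_and]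
        exact Relation.ReflTransGen.single ⟨k, rfl, hkr⟩
      · simp only [Finset.mem_filter, Finset.mem_univ, true_and]
        exact Relation.ReflTransGen.refl
    · intro k hk
      simp only [Finset.mem_filter, Finset.mem_univ, true_and] at hk ⊢
      exact Relation.ReflTransGen.head ⟨k, rfl, rfl⟩ hk
    · intro a ha b _
      simp only [Finset.mem_filter, Finset.mem_univ, true_and] at ha
      exact Relation.ReflTransGen.trans ha (hr b)
    · intro a ha
      simp only [Finset.mem_filter, Finset.mem_univ, true_and] at ha
      change x a / m = 1 ∨ x a / m = -1
      rcases (abs_eq hm.le).mp (hSm a ha) with h | h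
      · left; rw [h]; exact div_self hm.ne'
      · right; rw [h, neg_div, div_self hm.ne']
    · intro k hh ht
      simp only [Finset.mem_filter, Finset.mem_univ, true_and] at hh ht
      change x (head k) / m * (x (tail k) / m) = σ k
      have h5 : x (head k) * x (head k) = m * m := by
        rw [← hSm _ hh, abs_mul_abs_self]
      rw [hk k (hSm _ ht), div_mul_div_comm, mul_left_comm, h5]
      exact mul_div_cancel_right₀ _ (mul_pos hm hm).ne'
  · rintro ⟨S, hS, hB⟩
    have hlt := Ls_rank_lt hht hσ hS hB
    have hin : ∀ i, ∃ k, tail k = i := by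
      have hstep : ∀ a b, a ≠ b → Reaches head tail a b → ∃ k, tail k = b := by
        intro a b hab h
        rcases Relation.ReflTransGen.cases_tail h with h | ⟨c, -, k, -, hk⟩
        · exact absurd h.symm hab
        · exact ⟨k, hk⟩
      intro i
      by_cases hi : r = i
      · obtain ⟨a, ha, b, hb, hab⟩ := Finset.one_lt_card.mp (show 1 < S.card from hS.1)
        have hrS : r ∈ S := closed_reaches (P := fun a => a ∈ S) hS.2.1 (hr a) ha
        by_cases har : a = i
        · exact hstep b i (fun h => hab (har.trans h.symm)) (hi ▸ hS.2.2 b hb r hrS)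
        · exact hstep a i har (hi ▸ hS.2.2 a ha r hrS)
      · exact hstep r i hi (hr i)
    have h1 := hEin.mpr hin
    have h2 := Matrix.rank_le_width (Ls head tail σ)
    have h3 : 0 < N := r.pos
    omega
end

section
/- Let a signed digraph contain a directed spanning tree, and write ker for kernels of matrices acting on ℝ^M. (a) If the digraph is structurally balanced, then ker(L_{e_s}ᵀ) = ker(E_s). (b) If the digraph is structurally unbalanced and contains no root node, then ker(L_{e_s}ᵀ) = ker(E_s). (c) If the digraph is structurally unbalanced and contains a root node, then ker(L_{e_s}ᵀ) ≠ ker(E_s). -/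
open Matrix

lemma sum_Es {N M : ℕ} (head tail : Fin M → Fin N) (σ : Fin M → ℝ)
    (hht : ∀ k, head k ≠ tail k) (x : Fin N → ℝ) (k : Fin M) :
    ∑ i, x i * Es head tail σ i k = x (head k) - σ k * x (tail k) := by
  have h : ∀ i, x i * Es head tail σ i k =
      (if i = head k then x i else 0) + (if i = tail k then -σ k * x i else 0) := by
    intro i
    have hk := hht k
    simp only [Es, Matrix.of_apply]
    by_cases h1 : i = head k
    · subst h1
      simp [hk]
    · by_cases h2 : i = tail k
      · simp [h1, h2, hk.symm, mul_comm]
      · simp [h1, h2]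
  rw [Finset.sum_congr rfl fun i _ => h i, Finset.sum_add_distrib]
  simp
  ring

lemma Les_ker_iff {N M : ℕ} (head tail : Fin M → Fin N) (σ : Fin M → ℝ)
    (hσ : ∀ k, σ k = 1 ∨ σ k = -1) (v : Fin M → ℝ) :
    (Les head tail σ)ᵀ.mulVec v = 0 ↔ ∀ k, (Es head tail σ).mulVec v (tail k) = 0 := by
  have h : ∀ w : Fin N → ℝ, ∀ k, (Ein head tail σ)ᵀ.mulVec w k = -σ k * w (tail k) := by
    intro w k
    simp [Matrix.mulVec, dotProduct, Ein]
  rw [Les, Matrix.transpose_mul, Matrix.transpose_transpose, ← Matrix.mulVec_mulVec, funext_iff]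
  refine forall_congr' fun k => ?_
  rw [h]
  rcases hσ k with h1 | h1 <;> simp [h1]

lemma balanced_of_left_ker {N M : ℕ} (head tail : Fin M → Fin N) (σ : Fin M → ℝ)
    (hσ : ∀ k, σ k = 1 ∨ σ k = -1) (htree : HasSpanningTree head tail)
    (x : Fin N → ℝ) (hx : x ≠ 0) (hk : ∀ k, x (head k) = σ k * x (tail k)) :
    StructBalanced head tail σ := by
  obtain ⟨r, hr⟩ := htree
  have habs : ∀ b, |x b| = |x r| := by
    intro b
    have := hr b
    unfold Reaches at this
    induction this with
    | refl => rfl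
    | tail _ h ih =>
      obtain ⟨k, rfl, rfl⟩ := h
      rw [← ih, hk k, abs_mul]
      rcases hσ k with h1 | h1 <;> simp [h1]
  have hc : |x r| ≠ 0 := by
    intro h0
    apply hx
    funext b
    have := habs b
    rw [h0] at this
    simpa using this
  refine ⟨fun i => x i / |x r|, fun i => ?_, fun k => ?_⟩
  · rw [← habs i]
    have hi : |x i| ≠ 0 := by rw [habs i]; exact hc
    have hi' : x i ≠ 0 := by simpa using hi
    rcases abs_choice (x i) with h | h <;> rw [h]
    · left; field_simp
    · right; field_simp
  · have h2 : x (tail k) * x (tail k) = |x r| * |x r| := by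
      rw [← habs (tail k), abs_mul_abs_self]
    have h3 : σ k * x (tail k) / |x r| * (x (tail k) / |x r|)
        = σ k * (x (tail k) * x (tail k)) / (|x r| * |x r|) := by
      field_simp
    simp only [hk k]
    rw [h3, h2, mul_div_assoc, div_self (mul_ne_zero hc hc), mul_one]

lemma Es_surj {N M : ℕ} (head tail : Fin M → Fin N) (σ : Fin M → ℝ)
    (hht : ∀ k, head k ≠ tail k)
    (hσ : ∀ k, σ k = 1 ∨ σ k = -1) (htree : HasSpanningTree head tail)
    (hb : ¬ StructBalanced head tail σ) (w : Fin N → ℝ) :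
    ∃ v, (Es head tail σ).mulVec v = w := by
  have htop : LinearMap.range (Es head tail σ).mulVecLin = ⊤ := by
    by_contra hne
    obtain ⟨f, hf, hle⟩ := Submodule.exists_le_ker_of_lt_top _ (lt_top_iff_ne_top.2 hne)
    have hfx : ∀ w, f w = ∑ i, f (Pi.single i 1) * w i := by
      intro w
      conv_lhs => rw [pi_eq_sum_univ' w]
      simp [map_sum, mul_comm]
    apply hb
    refine balanced_of_left_ker head tail σ hσ htree (fun i => f (Pi.single i 1)) ?_ ?_
    · intro h0
      apply hf
      ext w
      simpa using congrFun h0 w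
    · intro k
      have h1 : f ((Es head tail σ).mulVecLin (Pi.single k 1)) = 0 := hle ⟨_, rfl⟩
      rw [hfx] at h1
      have h2 := sum_Es head tail σ hht (fun i => f (Pi.single i 1)) k
      simp only [Matrix.mulVecLin_apply, Matrix.mulVec_single_one, Matrix.col_apply] at h1
      linarith
  obtain ⟨v, hv⟩ := LinearMap.range_eq_top.1 htop w
  exact ⟨v, hv⟩

theorem kernel_edge_laplacian_vs_incidence {N M : ℕ}
    (head tail : Fin M → Fin N) (σ : Fin M → ℝ)
    (hht : ∀ k, head k ≠ tail k)
    (hinj : ∀ k k', head k = head k' → tail k = tail k' → k = k')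
    (hσ : ∀ k, σ k = 1 ∨ σ k = -1)
    (hdss : ∀ k k', head k = tail k' → tail k = head k' → σ k = σ k')
    (htree : HasSpanningTree head tail) :
    (StructBalanced head tail σ →
      {v : Fin M → ℝ | (Les head tail σ)ᵀ.mulVec v = 0} =
        {v : Fin M → ℝ | (Es head tail σ).mulVec v = 0}) ∧
    (¬ StructBalanced head tail σ → (¬ ∃ i, IsRootNode tail i) →
      {v : Fin M → ℝ | (Les head tail σ)ᵀ.mulVec v = 0} =
        {v : Fin M → ℝ | (Es head tail σ).mulVec v = 0}) ∧
    (¬ StructBalanced head tail σ → (∃ i, IsRootNode tail i) →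
      {v : Fin M → ℝ | (Les head tail σ)ᵀ.mulVec v = 0} ≠
        {v : Fin M → ℝ | (Es head tail σ).mulVec v = 0}) := by
  have hsub : ∀ v, (Es head tail σ).mulVec v = 0 → (Les head tail σ)ᵀ.mulVec v = 0 := by
    intro v hv
    rw [Les_ker_iff head tail σ hσ]
    simp [hv]
  refine ⟨?_, ?_, ?_⟩
  · rintro ⟨d, hd, hdk⟩
    ext v
    refine ⟨fun hv => ?_, hsub v⟩
    simp only [Set.mem_setOf_eq] at hv ⊢
    rw [Les_ker_iff head tail σ hσ] at hv
    obtain ⟨r, hr⟩ := htree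
    have hne : ∀ b, b ≠ r → (Es head tail σ).mulVec v b = 0 := by
      intro b hb
      rcases Relation.ReflTransGen.cases_tail (hr b) with h | ⟨c, _, k, _, rfl⟩
      · exact absurd h hb
      · exact hv k
    have hsum : ∑ i, d i * (Es head tail σ).mulVec v i = 0 := by
      simp only [Matrix.mulVec, dotProduct, Finset.mul_sum]
      rw [Finset.sum_comm]
      refine Finset.sum_eq_zero fun k _ => ?_
      have h := sum_Es head tail σ hht d k
      have h0 : d (head k) - σ k * d (tail k) = 0 := by
        rw [← hdk k]
        rcases hd (tail k) with h1 | h1 <;> rw [h1] <;> ring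
      rw [h0] at h
      simp only [← mul_assoc]
      rw [← Finset.sum_mul, h, zero_mul]
    rw [Finset.sum_eq_single r (fun b _ hb => by rw [hne b hb, mul_zero]) (by simp)] at hsum
    funext b
    by_cases hb : b = r
    · subst hb
      rcases hd b with h1 | h1 <;> simpa [h1] using hsum
    · exact hne b hb
  · intro _ hroot
    ext v
    refine ⟨fun hv => ?_, hsub v⟩
    simp only [Set.mem_setOf_eq] at hv ⊢
    rw [Les_ker_iff head tail σ hσ] at hv
    funext b
    simp only [IsRootNode, not_exists, not_forall, not_not] at hroot
    obtain ⟨k, rfl⟩ := hroot b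
    exact hv k
  · rintro hb ⟨i, hi⟩ heq
    obtain ⟨v, hv⟩ := Es_surj head tail σ hht hσ htree hb (Pi.single i 1)
    have h1 : v ∈ {v : Fin M → ℝ | (Les head tail σ)ᵀ.mulVec v = 0} := by
      rw [Set.mem_setOf_eq, Les_ker_iff head tail σ hσ]
      intro k
      rw [hv]
      simp [hi k]
    rw [heq, Set.mem_setOf_eq, hv] at h1
    have := congrFun h1 i
    simp at this
end

section
/- Under the multi-leader assumption, the algebraic multiplicity of 0 as a root of the characteristic polynomial of the signed Laplacian L_s equals l₁ + l_{2SB}, and every nonzero complex eigenvalue of L_s has positive real part. -/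
open Matrix

section helpers

open Finset

variable {N M : ℕ} (head tail : Fin M → Fin N) (σ : Fin M → ℝ)

theorem Ls_apply_aux (hht : ∀ k, head k ≠ tail k) (hσ : ∀ k, σ k = 1 ∨ σ k = -1)
    (x : Fin N → ℝ) (i : Fin N) :
    (Ls head tail σ *ᵥ x) i = ∑ k with tail k = i, (x i - σ k * x (head k)) := by
  unfold Ls
  rw [← Matrix.mulVec_mulVec]
  simp only [Matrix.mulVec, dotProduct, Ein, Matrix.of_apply, ite_mul, zero_mul]
  rw [Finset.sum_filter]
  refine Finset.sum_congr rfl fun k _ => ?_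
  by_cases h : tail k = i
  · rw [if_pos h, if_pos h.symm]
    have : ∑ j, (Es head tail σ)ᵀ k j * x j = x (head k) - σ k * x (tail k) := by
      have h2 : ∀ j, (Es head tail σ)ᵀ k j * x j =
          (if j = head k then x j else 0) + (if j = tail k then -σ k * x j else 0) := by
        intro j
        simp only [Es, Matrix.transpose_apply, Matrix.of_apply]
        by_cases h1 : j = head k
        · have h3 : j ≠ tail k := fun h => hht k (h1 ▸ h)
          rw [if_pos h1, if_pos h1, if_neg h3]; ring
        · rw [if_neg h1, if_neg h1]
          split_ifs <;> ring
      simp only [h2, Finset.sum_add_distrib, Finset.sum_ite_eq', Finset.sum_ite_eq,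
        Finset.mem_univ, if_true]
      ring
    rw [this, h]
    rcases hσ k with h | h <;> rw [h] <;> ring
  · rw [if_neg h, if_neg (fun h' => h h'.symm)]

theorem Ls_complex_apply_aux (hht : ∀ k, head k ≠ tail k) (hσ : ∀ k, σ k = 1 ∨ σ k = -1)
    (x : Fin N → ℂ) (i : Fin N) :
    ((Ls head tail σ).map ((↑) : ℝ → ℂ) *ᵥ x) i =
      ∑ k with tail k = i, (x i - (σ k : ℂ) * x (head k)) := by
  apply Complex.ext
  · have := Ls_apply_aux head tail σ hht hσ (fun j => (x j).re) i
    simpa [Matrix.mulVec, dotProduct] using this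
  · have := Ls_apply_aux head tail σ hht hσ (fun j => (x j).im) i
    simpa [Matrix.mulVec, dotProduct] using this

theorem re_pos_aux (hht : ∀ k, head k ≠ tail k) (hσ : ∀ k, σ k = 1 ∨ σ k = -1)
    (μ : ℂ) (hμ : (((Ls head tail σ).map ((↑) : ℝ → ℂ)).charpoly).IsRoot μ) (h0 : μ ≠ 0) :
    0 < μ.re := by
  rw [← Matrix.charpoly_toLin', ← Module.End.hasEigenvalue_iff_isRoot_charpoly] at hμ
  obtain ⟨v, hv⟩ := hμ.exists_hasEigenvector
  have hv1 := hv.apply_eq_smul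
  have hv0 : v ≠ 0 := hv.2
  obtain ⟨i0, hi0⟩ := Function.ne_iff.1 hv0
  obtain ⟨i, -, hi⟩ := Finset.exists_max_image (Finset.univ : Finset (Fin N)) (fun j => ‖v j‖)
    ⟨i0, Finset.mem_univ _⟩
  have hvi : 0 < ‖v i‖ := lt_of_lt_of_le (norm_pos_iff.2 hi0) (hi i0 (Finset.mem_univ _))
  have h1 := congrFun hv1 i
  rw [Matrix.toLin'_apply, Ls_complex_apply_aux head tail σ hht hσ, Finset.sum_sub_distrib,
    Finset.sum_const, nsmul_eq_mul, Pi.smul_apply, smul_eq_mul] at h1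
  set n : ℕ := (Finset.univ.filter (fun k => tail k = i)).card with hn
  have h2 : ((n : ℂ) - μ) * v i = ∑ k with tail k = i, (σ k : ℂ) * v (head k) := by
    linear_combination h1
  have h3 : ‖∑ k with tail k = i, (σ k : ℂ) * v (head k)‖ ≤ n * ‖v i‖ := by
    refine (norm_sum_le _ _).trans ?_
    rw [hn, ← nsmul_eq_mul]
    refine Finset.sum_le_card_nsmul _ _ _ fun k _ => ?_
    rw [norm_mul]
    have : ‖(σ k : ℂ)‖ = 1 := by rcases hσ k with h | h <;> simp [h]
    rw [this, one_mul]
    exact hi _ (Finset.mem_univ _)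
  rw [← h2, norm_mul] at h3
  have h4 : ‖(n : ℂ) - μ‖ ≤ n := le_of_mul_le_mul_right h3 hvi
  have h5 : ‖(n : ℂ) - μ‖ ^ 2 ≤ (n : ℝ) ^ 2 := by
    gcongr
  rw [← Complex.normSq_eq_norm_sq, Complex.normSq_apply] at h5
  simp at h5
  have h6 : 0 < μ.re * μ.re + μ.im * μ.im := by
    rw [← Complex.normSq_apply]; exact Complex.normSq_pos.2 h0
  have h7 : (0 : ℝ) ≤ n := Nat.cast_nonneg n
  by_contra hc
  push Not at hc
  nlinarith

theorem contract_aux (hht : ∀ k, head k ≠ tail k) (hσ : ∀ k, σ k = 1 ∨ σ k = -1)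
    (v : Fin N → ℝ) : ‖v - ((M : ℝ) + 1)⁻¹ • (Ls head tail σ *ᵥ v)‖ ≤ ‖v‖ := by
  rw [pi_norm_le_iff_of_nonneg (norm_nonneg _)]
  intro i
  rw [Pi.sub_apply, Pi.smul_apply, Ls_apply_aux head tail σ hht hσ, Finset.sum_sub_distrib,
    Finset.sum_const, nsmul_eq_mul, smul_eq_mul]
  set n : ℕ := (Finset.univ.filter (fun k => tail k = i)).card with hn
  have hnM : n ≤ M := by
    have := Finset.card_le_univ (Finset.univ.filter (fun k => tail k = i))
    simpa using this
  have hnM' : (n : ℝ) ≤ M := by exact_mod_cast hnM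
  have h3 : ‖∑ k with tail k = i, σ k * v (head k)‖ ≤ n * ‖v‖ := by
    refine (norm_sum_le _ _).trans ?_
    rw [hn, ← nsmul_eq_mul]
    refine Finset.sum_le_card_nsmul _ _ _ fun k _ => ?_
    rw [norm_mul]
    have : ‖σ k‖ = 1 := by rcases hσ k with h | h <;> simp [h]
    rw [this, one_mul]
    exact norm_le_pi_norm _ _
  set s := ∑ k with tail k = i, σ k * v (head k)
  have hvi := norm_le_pi_norm v i
  rw [Real.norm_eq_abs, abs_le] at *
  have hM : (0 : ℝ) < (M : ℝ) + 1 := by positivity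
  have e : v i - ((M : ℝ) + 1)⁻¹ * (n * v i - s) =
      ((M + 1 - n) * v i + s) / ((M : ℝ) + 1) := by
    field_simp; ring
  rw [e]
  constructor
  · rw [le_div_iff₀ hM]; nlinarith
  · rw [div_le_iff₀ hM]; nlinarith

theorem semisimple_aux (hht : ∀ k, head k ≠ tail k) (hσ : ∀ k, σ k = 1 ∨ σ k = -1)
    (y : Fin N → ℝ) (h : Ls head tail σ *ᵥ (Ls head tail σ *ᵥ y) = 0) :
    Ls head tail σ *ᵥ y = 0 := by
  set x := Ls head tail σ *ᵥ y with hx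
  set c : ℝ := ((M : ℝ) + 1)⁻¹ with hc
  have hcpos : 0 < c := by positivity
  have key : ∀ n : ℕ, ‖y - (n * c) • x‖ ≤ ‖y‖ := by
    intro n
    induction n with
    | zero => simp
    | succ n ih =>
      have h1 := contract_aux head tail σ hht hσ (y - (n * c) • x)
      rw [Matrix.mulVec_sub, Matrix.mulVec_smul, h, ← hx, smul_zero, sub_zero] at h1
      have e : y - (((n + 1 : ℕ) : ℝ) * c) • x = y - (n * c) • x - c • x := by
        push_cast
        rw [sub_sub, ← add_smul]; ring_nf
      rw [e]
      exact h1.trans ih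
  by_contra hne
  have hxpos : 0 < ‖x‖ := norm_pos_iff.2 hne
  obtain ⟨n, hn⟩ := exists_nat_gt (2 * ‖y‖ / (c * ‖x‖))
  rw [div_lt_iff₀ (by positivity)] at hn
  have h2 : ‖((n : ℝ) * c) • x‖ ≤ 2 * ‖y‖ := by
    have e : ((n : ℝ) * c) • x = y - (y - ((n : ℝ) * c) • x) := by abel
    rw [e]
    refine (norm_sub_le _ _).trans ?_
    linarith [key n]
  rw [norm_smul, Real.norm_of_nonneg (by positivity)] at h2
  linarith

theorem max_step_aux (hht : ∀ k, head k ≠ tail k) (hσ : ∀ k, σ k = 1 ∨ σ k = -1)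
    (x : Fin N → ℝ) (m : ℝ) (hm : ∀ i, |x i| ≤ m) (i : Fin N) (hi : |x i| = m)
    (hL : (Ls head tail σ *ᵥ x) i = 0) (k : Fin M) (hk : tail k = i) :
    σ k * x i * x (head k) = m ^ 2 := by
  rw [Ls_apply_aux head tail σ hht hσ] at hL
  have h1 : ∑ k with tail k = i, (m ^ 2 - σ k * x i * x (head k)) = 0 := by
    have : ∑ k with tail k = i, (m ^ 2 - σ k * x i * x (head k)) =
        x i * ∑ k with tail k = i, (x i - σ k * x (head k)) := by
      rw [Finset.mul_sum]
      refine Finset.sum_congr rfl fun k _ => ?_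
      rw [← hi, sq_abs]; ring
    rw [this, hL, mul_zero]
  have h2 := (Finset.sum_eq_zero_iff_of_nonneg (fun k _ => ?_)).1 h1 k (by simp [hk])
  · linarith
  · have h3 : σ k * x i * x (head k) ≤ |σ k * x i * x (head k)| := le_abs_self _
    have h4 : |σ k * x i * x (head k)| ≤ m ^ 2 := by
      rw [abs_mul, abs_mul, hi]
      have : |σ k| = 1 := by rcases hσ k with h | h <;> simp [h]
      rw [this, one_mul, pow_two]
      exact mul_le_mul_of_nonneg_left (hm _) (hi ▸ abs_nonneg _)
    linarith

theorem uniq_aux {l₂ : ℕ} (S : Fin l₂ → Finset (Fin N))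
    (hht : ∀ k, head k ≠ tail k) (hσ : ∀ k, σ k = 1 ∨ σ k = -1)
    (hSCCs : ∀ j, IsRootedSCC head tail (S j))
    (hreach : ∀ i : Fin N, ∃ a, (IsRootNode tail a ∨ ∃ j, a ∈ S j) ∧ Reaches head tail a i)
    (x : Fin N → ℝ) (hx : ∀ i, x i = 0 ∨ (Ls head tail σ *ᵥ x) i = 0)
    (hroot : ∀ i, IsRootNode tail i → x i = 0)
    (hSB : ∀ j, SCCBalanced head tail σ (S j) → ∃ r ∈ S j, x r = 0) : x = 0 := by
  by_contra hne
  obtain ⟨i0, hi0⟩ := Function.ne_iff.1 hne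
  obtain ⟨i, -, hi⟩ := Finset.exists_max_image (Finset.univ : Finset (Fin N)) (fun j => |x j|)
    ⟨i0, Finset.mem_univ _⟩
  have hmpos : 0 < |x i| := lt_of_lt_of_le (abs_pos.2 hi0) (hi i0 (Finset.mem_univ _))
  set m := |x i| with hm
  have hle : ∀ j, |x j| ≤ m := fun j => hi j (Finset.mem_univ _)
  have edge : ∀ k, |x (tail k)| = m → σ k * x (tail k) * x (head k) = m ^ 2 := by
    intro k hk
    refine max_step_aux head tail σ hht hσ x m hle _ hk ?_ k rfl
    rcases hx (tail k) with h | h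
    · rw [h, abs_zero] at hk; linarith
    · exact h
  have step : ∀ k, |x (tail k)| = m → |x (head k)| = m := by
    intro k hk
    have h1 := congrArg abs (edge k hk)
    have : |σ k| = 1 := by rcases hσ k with h | h <;> simp [h]
    rw [abs_mul, abs_mul, this, hk, one_mul, abs_of_nonneg (sq_nonneg m), pow_two] at h1
    exact mul_left_cancel₀ hmpos.ne' h1
  have back : ∀ a b, Reaches head tail a b → |x b| = m → |x a| = m := by
    intro a b hab
    induction hab with
    | refl => exact id
    | tail _ h ih =>
      obtain ⟨k, rfl, rfl⟩ := h
      exact fun h => ih (step k h)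
  obtain ⟨a, ha, hai⟩ := hreach i
  have hxa := back a i hai rfl
  rcases ha with ha | ⟨j, ha⟩
  · rw [hroot a ha, abs_zero] at hxa; linarith
  · have hS : ∀ b ∈ S j, |x b| = m := fun b hb => back b a ((hSCCs j).2.2 b hb a ha) hxa
    have hbal : SCCBalanced head tail σ (S j) := by
      refine ⟨fun b => x b / m, fun b hb => ?_, fun k hk1 hk2 => ?_⟩
      · rcases (abs_eq hmpos.le).1 (hS b hb) with h | h
        · left; simp only [h]; field_simp
        · right; simp only [h]; field_simp
      · have h1 := edge k (hS _ hk2)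
        have h2 : σ k * σ k = 1 := by rcases hσ k with h | h <;> simp [h]
        have h3 : x (head k) * x (tail k) = σ k * m ^ 2 := by
          linear_combination (-x (head k) * x (tail k)) * h2 + σ k * h1
        field_simp
        linarith
    obtain ⟨r, hr, hr0⟩ := hSB j hbal
    have := hS r hr
    rw [hr0, abs_zero] at this
    linarith

theorem ker_finrank_aux {l₂ : ℕ} (S : Fin l₂ → Finset (Fin N))
    (hht : ∀ k, head k ≠ tail k) (hσ : ∀ k, σ k = 1 ∨ σ k = -1)
    (hSCCs : ∀ j, IsRootedSCC head tail (S j))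
    (hdisj : ∀ j j', j ≠ j' → Disjoint (S j) (S j'))
    (hreach : ∀ i : Fin N, ∃ a, (IsRootNode tail a ∨ ∃ j, a ∈ S j) ∧ Reaches head tail a i) :
    Module.finrank ℝ (LinearMap.ker (Matrix.toLin' (Ls head tail σ))) =
      {i : Fin N | IsRootNode tail i}.ncard +
      {j : Fin l₂ | SCCBalanced head tail σ (S j)}.ncard := by
  classical
  have hne : ∀ j, ∃ r, r ∈ S j := fun j =>
    Finset.card_pos.1 (lt_of_lt_of_le (by norm_num) (hSCCs j).1)
  choose r hr using hne
  have hnotroot : ∀ j, ∀ i ∈ S j, ¬ IsRootNode tail i := by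
    intro j i hi hroot
    obtain ⟨b, hb, hbi⟩ := Finset.exists_mem_ne (lt_of_lt_of_le (by norm_num) (hSCCs j).1) i
    have h := (hSCCs j).2.2 b hb i hi
    rcases Relation.ReflTransGen.cases_tail h with h | ⟨c, -, k, -, hk⟩
    · exact hbi h.symm
    · exact hroot k hk
  let ι := {i : Fin N // IsRootNode tail i} ⊕ {j : Fin l₂ // SCCBalanced head tail σ (S j)}
  let p : ι → Fin N := Sum.elim (fun i => i.1) (fun j => r j.1)
  let ev : LinearMap.ker (Matrix.toLin' (Ls head tail σ)) →ₗ[ℝ] (ι → ℝ) :=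
    (LinearMap.funLeft ℝ ℝ p).comp (Submodule.subtype _)
  have hev : ∀ x t, ev x t = x.1 (p t) := fun x t => rfl
  have inj : Function.Injective ev := by
    rw [injective_iff_map_eq_zero]
    intro x hx
    apply Subtype.ext
    have hx2 : Ls head tail σ *ᵥ x.1 = 0 := by
      have := x.2; rwa [LinearMap.mem_ker, Matrix.toLin'_apply] at this
    refine uniq_aux head tail σ S hht hσ hSCCs hreach x.1 (fun i => Or.inr (congrFun hx2 i)) ?_ ?_
    · intro i hi
      exact congrFun hx (Sum.inl ⟨i, hi⟩)
    · intro j hj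
      exact ⟨r j, hr j, congrFun hx (Sum.inr ⟨j, hj⟩)⟩
  have surj : Function.Surjective ev := by
    intro g
    -- Dirichlet problem
    let lead : Fin N → Prop := fun i => IsRootNode tail i ∨ ∃ j, i ∈ S j
    let T : (Fin N → ℝ) →ₗ[ℝ] (Fin N → ℝ) :=
      { toFun := fun x i => if lead i then x i else (Ls head tail σ *ᵥ x) i
        map_add' := by
          intro x y; ext i
          simp only [Matrix.mulVec_add, Pi.add_apply]
          split_ifs <;> rfl
        map_smul' := by
          intro c x; ext i
          simp only [Matrix.mulVec_smul, Pi.smul_apply, RingHom.id_apply]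
          split_ifs <;> rfl }
    have hT : ∀ x i, T x i = if lead i then x i else (Ls head tail σ *ᵥ x) i := fun _ _ => rfl
    have Tinj : Function.Injective T := by
      rw [injective_iff_map_eq_zero]
      intro x hx
      have hl : ∀ i, lead i → x i = 0 := by
        intro i hi
        have := congrFun hx i
        rwa [hT, if_pos hi] at this
      refine uniq_aux head tail σ S hht hσ hSCCs hreach x (fun i => ?_)
        (fun i hi => hl i (Or.inl hi)) (fun j _ => ⟨r j, hr j, hl _ (Or.inr ⟨j, hr j⟩)⟩)
      by_cases hi : lead i
      · exact Or.inl (hl i hi)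
      · right
        have := congrFun hx i
        rwa [hT, if_neg hi] at this
    have Tsurj : Function.Surjective T := LinearMap.injective_iff_surjective.1 Tinj
    have hd : ∀ j : {j : Fin l₂ // SCCBalanced head tail σ (S j)}, ∃ d : Fin N → ℝ,
      (∀ i ∈ S j.1, d i = 1 ∨ d i = -1) ∧
      ∀ k, head k ∈ S j.1 → tail k ∈ S j.1 → d (head k) * d (tail k) = σ k := fun j => j.2
    choose d hd1 hd2 using hd
    have hf : ∀ i, ∃ y : ℝ, (∀ h : IsRootNode tail i, y = g (Sum.inl ⟨i, h⟩)) ∧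
        (∀ j (h : SCCBalanced head tail σ (S j)), i ∈ S j →
          y = g (Sum.inr ⟨j, h⟩) * d ⟨j, h⟩ (r j) * d ⟨j, h⟩ i) ∧
        (∀ j, ¬ SCCBalanced head tail σ (S j) → i ∈ S j → y = 0) ∧
        (¬ lead i → y = 0) := by
      intro i
      have uniqj : ∀ j j', i ∈ S j → i ∈ S j' → j = j' := by
        intro j j' h h'
        by_contra hjj
        exact Finset.disjoint_left.1 (hdisj j j' hjj) h h'
      by_cases h1 : IsRootNode tail i
      · exact ⟨g (Sum.inl ⟨i, h1⟩), fun _ => rfl, fun j _ hj => absurd h1 (hnotroot j i hj),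
          fun j _ hj => absurd h1 (hnotroot j i hj), fun h => absurd (Or.inl h1) h⟩
      · by_cases h2 : ∃ j, SCCBalanced head tail σ (S j) ∧ i ∈ S j
        · obtain ⟨j, hb, hij⟩ := h2
          refine ⟨g (Sum.inr ⟨j, hb⟩) * d ⟨j, hb⟩ (r j) * d ⟨j, hb⟩ i, fun h => absurd h h1,
            ?_, ?_, fun h => absurd (Or.inr ⟨j, hij⟩) h⟩
          · intro j' hb' hij'
            obtain rfl := uniqj j j' hij hij'
            rfl
          · intro j' hb' hij'
            obtain rfl := uniqj j j' hij hij'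
            exact absurd hb hb'
        · exact ⟨0, fun h => absurd h h1, fun j hb hij => absurd ⟨j, hb, hij⟩ h2,
            fun _ _ _ => rfl, fun _ => rfl⟩
    choose f hf1 hf2 hf3 hf4 using hf
    obtain ⟨x, hx⟩ := Tsurj f
    have hxl : ∀ i, lead i → x i = f i := by
      intro i hi
      have := congrFun hx i
      rwa [hT, if_pos hi] at this
    have hker : Ls head tail σ *ᵥ x = 0 := by
      ext i
      by_cases hi : lead i
      · rw [Ls_apply_aux head tail σ hht hσ, Pi.zero_apply]
        refine Finset.sum_eq_zero fun k hk => ?_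
        have hk : tail k = i := by simpa using hk
        rcases hi with hi | ⟨j, hij⟩
        · exact absurd hk (hi k)
        · have hh : head k ∈ S j := (hSCCs j).2.1 k (hk ▸ hij)
          rw [hxl i (Or.inr ⟨j, hij⟩), hxl _ (Or.inr ⟨j, hh⟩)]
          by_cases hb : SCCBalanced head tail σ (S j)
          · rw [hf2 i j hb hij, hf2 _ j hb hh, ← hd2 ⟨j, hb⟩ k hh (hk ▸ hij), hk]
            rcases hd1 ⟨j, hb⟩ _ hh with h | h <;> rw [h] <;> ring
          · rw [hf3 i j hb hij, hf3 _ j hb hh]; ring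
      · have := congrFun hx i
        rw [hT, if_neg hi, hf4 i hi] at this
        exact this
    refine ⟨⟨x, by rwa [LinearMap.mem_ker, Matrix.toLin'_apply]⟩, ?_⟩
    ext t
    rw [hev]
    rcases t with ⟨i, hi⟩ | ⟨j, hj⟩
    · change x i = _
      rw [hxl i (Or.inl hi), hf1 i hi]
    · change x (r j) = _
      rw [hxl _ (Or.inr ⟨j, hr j⟩), hf2 _ j hj (hr j)]
      rcases hd1 ⟨j, hj⟩ _ (hr j) with h | h <;> rw [h] <;> ring
  rw [(LinearEquiv.ofBijective ev ⟨inj, surj⟩).finrank_eq, Module.finrank_fintype_fun_eq_card,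
    Fintype.card_sum, ← Nat.card_eq_fintype_card, ← Nat.card_eq_fintype_card]
  rfl

end helpers

theorem zero_multiplicity_multileader {N M l₁ l₂ l2SB : ℕ}
    (head tail : Fin M → Fin N) (σ : Fin M → ℝ) (S : Fin l₂ → Finset (Fin N))
    (hht : ∀ k, head k ≠ tail k)
    (hinj : ∀ k k', head k = head k' → tail k = tail k' → k = k')
    (hσ : ∀ k, σ k = 1 ∨ σ k = -1)
    (hdss : ∀ k k', head k = tail k' → tail k = head k' → σ k = σ k')
    -- multi-leader assumption:
    (hroots : {i : Fin N | IsRootNode tail i}.ncard = l₁)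
    (hSCCs : ∀ j, IsRootedSCC head tail (S j))
    (hall : ∀ T : Finset (Fin N), IsRootedSCC head tail T → ∃ j, T = S j)
    (hdisj : ∀ j j', j ≠ j' → Disjoint (S j) (S j'))
    (hSBcount : {j : Fin l₂ | SCCBalanced head tail σ (S j)}.ncard = l2SB)
    (hm : 1 < l₁ + l₂)
    (hreach : ∀ i : Fin N, ¬ IsRootNode tail i → (∀ j, i ∉ S j) →
      ∃ a, (IsRootNode tail a ∨ ∃ j, a ∈ S j) ∧ Reaches head tail a i)
    :
    Polynomial.rootMultiplicity 0 (((Ls head tail σ).map ((↑) : ℝ → ℂ)).charpoly) =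
      l₁ + l2SB ∧
    ∀ μ : ℂ, (((Ls head tail σ).map ((↑) : ℝ → ℂ)).charpoly).IsRoot μ → μ ≠ 0 →
      0 < μ.re := by
  have hreach' : ∀ i : Fin N, ∃ a, (IsRootNode tail a ∨ ∃ j, a ∈ S j) ∧
      Reaches head tail a i := by
    intro i
    by_cases h1 : IsRootNode tail i
    · exact ⟨i, Or.inl h1, Relation.ReflTransGen.refl⟩
    · by_cases h2 : ∃ j, i ∈ S j
      · exact ⟨i, Or.inr h2, Relation.ReflTransGen.refl⟩
      · exact hreach i h1 (fun j hj => h2 ⟨j, hj⟩)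
  refine ⟨?_, fun μ hμ h0 => re_pos_aux head tail σ hht hσ μ hμ h0⟩
  have e1 : ((Ls head tail σ).map ((↑) : ℝ → ℂ)).charpoly =
      (Ls head tail σ).charpoly.map Complex.ofRealHom :=
    Matrix.charpoly_map (Ls head tail σ) Complex.ofRealHom
  have e2 := Polynomial.eq_rootMultiplicity_map (p := (Ls head tail σ).charpoly)
    (f := Complex.ofRealHom) Complex.ofReal_injective 0
  rw [map_zero] at e2
  rw [e1, ← e2, ← Matrix.charpoly_toLin', ← LinearMap.finrank_maxGenEigenspace_eq]
  have e3 : Module.End.maxGenEigenspace (Matrix.toLin' (Ls head tail σ)) 0 =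
      LinearMap.ker (Matrix.toLin' (Ls head tail σ)) := by
    ext y
    rw [Module.End.mem_maxGenEigenspace, LinearMap.mem_ker, zero_smul, sub_zero]
    constructor
    · rintro ⟨n, hn⟩
      induction n with
      | zero =>
        have hy : y = 0 := by simpa using hn
        rw [hy, map_zero]
      | succ n ih =>
        cases n with
        | zero => simpa using hn
        | succ n =>
          apply ih
          rw [pow_succ', pow_succ', Module.End.mul_apply, Module.End.mul_apply] at hn
          rw [pow_succ', Module.End.mul_apply]
          rw [Matrix.toLin'_apply, Matrix.toLin'_apply] at hn
          rw [Matrix.toLin'_apply]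
          exact semisimple_aux head tail σ hht hσ _ hn
    · intro h
      exact ⟨1, by simpa using h⟩
  rw [e3, ker_finrank_aux head tail σ S hht hσ hSCCs hdisj hreach', hroots, hSBcount]
end

section
/- Under the multi-leader assumption, the rank of the signed Laplacian L_s equals N − l₁ − l_{2SB}. -/
open Matrix

lemma Ls_mulVec_apply {N M : ℕ} (head tail : Fin M → Fin N) (σ : Fin M → ℝ)
    (hht : ∀ k, head k ≠ tail k) (hσ : ∀ k, σ k = 1 ∨ σ k = -1) (x : Fin N → ℝ) (i : Fin N) :
    (Ls head tail σ *ᵥ x) i =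
      ∑ k, if tail k = i then x i - σ k * x (head k) else 0 := by
  have h1 : ∀ k, ((Es head tail σ)ᵀ *ᵥ x) k = x (head k) - σ k * x (tail k) := by
    intro k
    have : ∀ t, (Es head tail σ)ᵀ k t * x t =
        (if t = head k then x t else 0) + (if t = tail k then -σ k * x t else 0) := by
      intro t
      have := hht k
      simp only [Es, Matrix.transpose_apply, Matrix.of_apply]
      by_cases h : t = head k
      · have h2 : t ≠ tail k := by rw [h]; exact this
        simp [h, this]
      · simp [h]
    simp only [Matrix.mulVec, dotProduct]
    rw [Finset.sum_congr rfl (fun t _ => this t), Finset.sum_add_distrib]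
    simp
    ring
  rw [Ls, ← Matrix.mulVec_mulVec]
  conv_lhs => simp only [Matrix.mulVec, dotProduct]
  refine Finset.sum_congr rfl fun k _ => ?_
  have h2 := h1 k
  simp only [Matrix.mulVec, dotProduct] at h2
  rw [h2]
  by_cases h : tail k = i
  · simp only [Ein, Matrix.of_apply, h, if_true]
    rcases hσ k with h' | h' <;> rw [h'] <;> ring
  · simp [Ein, h, Ne.symm h]

lemma max_step {N M : ℕ} (head tail : Fin M → Fin N) (σ : Fin M → ℝ)
    (hht : ∀ k, head k ≠ tail k) (hσ : ∀ k, σ k = 1 ∨ σ k = -1) (x : Fin N → ℝ) (m : ℝ)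
    (hm : 0 < m) (hmax : ∀ t, |x t| ≤ m) (k : Fin M)
    (hL : (Ls head tail σ *ᵥ x) (tail k) = 0) (hk : |x (tail k)| = m) :
    σ k * x (head k) = x (tail k) := by
  rw [Ls_mulVec_apply head tail σ hht hσ] at hL
  have hne : x (tail k) ≠ 0 := by
    intro h; rw [h, abs_zero] at hk; exact hm.ne hk
  have hsq : x (tail k) * x (tail k) = m * m := by rw [← hk, abs_mul_abs_self]
  have h0 : ∑ l, x (tail k) * (if tail l = tail k then x (tail k) - σ l * x (head l) else 0) = 0 := by
    rw [← Finset.mul_sum, hL, mul_zero]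
  have hnn : ∀ l ∈ Finset.univ, 0 ≤
      x (tail k) * (if tail l = tail k then x (tail k) - σ l * x (head l) else 0) := by
    intro l _
    split_ifs
    · have h3 : x (tail k) * (σ l * x (head l)) ≤ m * m := by
        refine (le_abs_self _).trans ?_
        rw [abs_mul, abs_mul, hk]
        have : |σ l| = 1 := by rcases hσ l with h | h <;> simp [h]
        rw [this, one_mul]
        exact mul_le_mul_of_nonneg_left (hmax _) hm.le
      rw [mul_sub, hsq]; linarith
    · simp
  have h4 := (Finset.sum_eq_zero_iff_of_nonneg hnn).1 h0 k (Finset.mem_univ _)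
  rw [if_pos rfl] at h4
  rcases mul_eq_zero.1 h4 with h | h
  · exact absurd h hne
  · linarith

lemma kernel_trivial {N M l₂ : ℕ}
    (head tail : Fin M → Fin N) (σ : Fin M → ℝ) (S : Fin l₂ → Finset (Fin N))
    (hht : ∀ k, head k ≠ tail k)
    (hσ : ∀ k, σ k = 1 ∨ σ k = -1)
    (hSCCs : ∀ j, IsRootedSCC head tail (S j))
    (hreach : ∀ i : Fin N, ¬ IsRootNode tail i → (∀ j, i ∉ S j) →
      ∃ a, (IsRootNode tail a ∨ ∃ j, a ∈ S j) ∧ Reaches head tail a i)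
    (B : Set (Fin N)) (hBr : ∀ i, IsRootNode tail i → i ∈ B)
    (hBS : ∀ j, SCCBalanced head tail σ (S j) → ∃ r ∈ S j, r ∈ B)
    (x : Fin N → ℝ) (hx0 : ∀ i ∈ B, x i = 0)
    (hx : ∀ i, i ∉ B → (Ls head tail σ *ᵥ x) i = 0) : x = 0 := by
  by_contra hne
  obtain ⟨t, ht⟩ : ∃ t, x t ≠ 0 := by
    by_contra h; push Not at h; exact hne (funext h)
  obtain ⟨i, -, hi⟩ := Finset.exists_max_image Finset.univ (fun t => |x t|) ⟨t, Finset.mem_univ _⟩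
  obtain ⟨m, hmi⟩ : ∃ m, m = |x i| := ⟨_, rfl⟩
  have hmax : ∀ t, |x t| ≤ m := fun t => hmi ▸ hi t (Finset.mem_univ _)
  have hm : 0 < m := lt_of_lt_of_le (abs_pos.2 ht) (hmax t)
  have hnB : ∀ t, |x t| = m → t ∉ B := by
    intro t h hB
    rw [hx0 t hB, abs_zero] at h; exact hm.ne h
  have step : ∀ k, |x (tail k)| = m → σ k * x (head k) = x (tail k) := fun k hk =>
    max_step head tail σ hht hσ x m hm hmax k (hx _ (hnB _ hk)) hk
  have prop : ∀ a b, Reaches head tail a b → |x b| = m → |x a| = m := by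
    intro a b hab hb
    induction hab using Relation.ReflTransGen.head_induction_on with
    | refl => exact hb
    | head h _ ih =>
      obtain ⟨k, rfl, rfl⟩ := h
      have h1 := step k ih
      rw [← h1, abs_mul] at ih
      have : |σ k| = 1 := by rcases hσ k with h | h <;> simp [h]
      rwa [this, one_mul] at ih
  obtain ⟨a, ha, hai⟩ : ∃ a, (IsRootNode tail a ∨ ∃ j, a ∈ S j) ∧ Reaches head tail a i := by
    by_cases h1 : IsRootNode tail i
    · exact ⟨i, Or.inl h1, Relation.ReflTransGen.refl⟩
    by_cases h2 : ∃ j, i ∈ S j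
    · exact ⟨i, Or.inr h2, Relation.ReflTransGen.refl⟩
    push Not at h2
    exact hreach i h1 h2
  have ham := prop a i hai hmi.symm
  rcases ha with ha | ⟨j, ha⟩
  · exact hnB a ham (hBr a ha)
  have hSm : ∀ b ∈ S j, |x b| = m := fun b hb => prop b a ((hSCCs j).2.2 b hb a ha) ham
  have hbal : SCCBalanced head tail σ (S j) := by
    refine ⟨fun i => x i / m, ?_, ?_⟩
    · intro b hb
      have := hSm b hb
      rcases abs_eq hm.le |>.1 this with h | h
      · left; change x b / m = 1; rw [h, div_self hm.ne']
      · right; change x b / m = -1; rw [h, neg_div, div_self hm.ne']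
    · intro k hk hk'
      have h1 := step k (hSm _ hk')
      have h2 : x (head k) * x (head k) = m * m := by
        rw [← hSm _ hk, abs_mul_abs_self]
      have h3 : x (head k) * x (tail k) = σ k * (m * m) := by
        rw [← h1, ← h2]; ring
      change x (head k) / m * (x (tail k) / m) = σ k
      rw [div_mul_div_comm, h3]
      field_simp
  obtain ⟨r, hr, hrB⟩ := hBS j hbal
  exact hnB r (hSm r hr) hrB

theorem rank_laplacian_multileader {N M l₁ l₂ l2SB : ℕ}
    (head tail : Fin M → Fin N) (σ : Fin M → ℝ) (S : Fin l₂ → Finset (Fin N))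
    (hht : ∀ k, head k ≠ tail k)
    (hinj : ∀ k k', head k = head k' → tail k = tail k' → k = k')
    (hσ : ∀ k, σ k = 1 ∨ σ k = -1)
    (hdss : ∀ k k', head k = tail k' → tail k = head k' → σ k = σ k')
    -- multi-leader assumption:
    (hroots : {i : Fin N | IsRootNode tail i}.ncard = l₁)
    (hSCCs : ∀ j, IsRootedSCC head tail (S j))
    (hall : ∀ T : Finset (Fin N), IsRootedSCC head tail T → ∃ j, T = S j)
    (hdisj : ∀ j j', j ≠ j' → Disjoint (S j) (S j'))
    (hSBcount : {j : Fin l₂ | SCCBalanced head tail σ (S j)}.ncard = l2SB)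
    (hm : 1 < l₁ + l₂)
    (hreach : ∀ i : Fin N, ¬ IsRootNode tail i → (∀ j, i ∉ S j) →
      ∃ a, (IsRootNode tail a ∨ ∃ j, a ∈ S j) ∧ Reaches head tail a i)
    :
    (Ls head tail σ).rank = N - l₁ - l2SB := by
  classical
  have huniq : ∀ j j' i, i ∈ S j → i ∈ S j' → j = j' := by
    intro j j' i h h'
    by_contra hne
    exact Finset.disjoint_left.1 (hdisj j j' hne) h h'
  have hSnr : ∀ j, ∀ i ∈ S j, ¬ IsRootNode tail i := by
    intro j i hi hr
    obtain ⟨b, hb, hbi⟩ := Finset.exists_mem_ne (hSCCs j).1 i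
    have := (hSCCs j).2.2 b hb i hi
    rcases Relation.ReflTransGen.cases_tail this with h | ⟨c, _, k, _, hk⟩
    · exact hbi h.symm
    · exact hr k hk
  have hrep : ∀ j, ∃ r, r ∈ S j := fun j =>
    Finset.card_pos.1 (lt_of_lt_of_le (by norm_num) (hSCCs j).1)
  choose r hr using hrep
  have hrinj : Function.Injective r := fun j j' h => huniq j j' (r j) (hr j) (h ▸ hr j')
  obtain ⟨B, hBdef⟩ : ∃ B : Set (Fin N), B = {i | IsRootNode tail i} ∪
    r '' {j | SCCBalanced head tail σ (S j)} := ⟨_, rfl⟩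
  have hBcard : B.ncard = l₁ + l2SB := by
    rw [hBdef, Set.ncard_union_eq _ (Set.toFinite _) (Set.toFinite _),
      Set.ncard_image_of_injective _ hrinj, hroots, hSBcount]
    rw [Set.disjoint_left]
    rintro i hi ⟨j, _, rfl⟩
    exact hSnr j _ (hr j) hi
  have hBr : ∀ i, IsRootNode tail i → i ∈ B := fun i hi => hBdef ▸ Or.inl hi
  have hBS : ∀ j, SCCBalanced head tail σ (S j) → r j ∈ B :=
    fun j hj => hBdef ▸ Or.inr ⟨j, hj, rfl⟩
  let K := LinearMap.ker (Ls head tail σ).mulVecLin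
  let Φ : K →ₗ[ℝ] (B → ℝ) :=
    (LinearMap.funLeft ℝ ℝ (Subtype.val : B → Fin N)).comp K.subtype
  have hΦinj : Function.Injective Φ := by
    rw [injective_iff_map_eq_zero]
    rintro ⟨x, hx⟩ h
    have hx' : Ls head tail σ *ᵥ x = 0 := by simpa [K] using hx
    have : x = 0 := by
      refine kernel_trivial head tail σ S hht hσ hSCCs hreach B hBr
        (fun j hj => ⟨r j, hr j, hBS j hj⟩) x ?_ ?_
      · intro i hi
        exact congrFun h ⟨i, hi⟩
      · intro i _
        rw [hx']; rfl
    exact Subtype.ext this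
  have hΦsurj : Function.Surjective Φ := by
    intro c
    have hd : ∀ j, ∃ d : Fin N → ℝ, SCCBalanced head tail σ (S j) →
        (∀ i ∈ S j, d i = 1 ∨ d i = -1) ∧
        ∀ k, head k ∈ S j → tail k ∈ S j → d (head k) * d (tail k) = σ k := by
      intro j
      by_cases h : SCCBalanced head tail σ (S j)
      · obtain ⟨d, hd⟩ := h
        exact ⟨d, fun _ => hd⟩
      · exact ⟨0, fun h' => absurd h' h⟩
    choose d hd using hd
    let c' : Fin N → ℝ := fun i => if h : i ∈ B then c ⟨i, h⟩ else 0
    let U : Set (Fin N) := {i | IsRootNode tail i ∨ ∃ j, SCCBalanced head tail σ (S j) ∧ i ∈ S j}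
    let b : Fin N → ℝ := fun i =>
      if IsRootNode tail i then c' i else
      if h : ∃ j, SCCBalanced head tail σ (S j) ∧ i ∈ S j then
        c' (r h.choose) * d h.choose (r h.choose) * d h.choose i else 0
    have hb1 : ∀ i, IsRootNode tail i → b i = c' i := fun i hi => if_pos hi
    have hb2 : ∀ j, SCCBalanced head tail σ (S j) → ∀ i ∈ S j,
        b i = c' (r j) * d j (r j) * d j i := by
      intro j hj i hi
      have h : ∃ j, SCCBalanced head tail σ (S j) ∧ i ∈ S j := ⟨j, hj, hi⟩
      have hc : h.choose = j := huniq _ _ i h.choose_spec.2 hi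
      have : b i = c' (r h.choose) * d h.choose (r h.choose) * d h.choose i := by
        simp only [b]
        rw [if_neg (hSnr j i hi), dif_pos h]
      rw [this, hc]
    let L' : (Fin N → ℝ) →ₗ[ℝ] (Fin N → ℝ) :=
      { toFun := fun x i => if i ∈ U then x i else (Ls head tail σ *ᵥ x) i
        map_add' := by
          intro x y; funext i
          simp only [Pi.add_apply, Matrix.mulVec_add]; split_ifs <;> rfl
        map_smul' := by
          intro a x; funext i
          simp only [Pi.smul_apply, Matrix.mulVec_smul, RingHom.id_apply]; split_ifs <;> rfl }
    have hL'inj : Function.Injective L' := by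
      rw [injective_iff_map_eq_zero]
      intro x hx
      have hx' : ∀ i, (if i ∈ U then x i else (Ls head tail σ *ᵥ x) i) = 0 :=
        fun i => congrFun hx i
      refine kernel_trivial head tail σ S hht hσ hSCCs hreach U (fun i hi => Or.inl hi)
        (fun j hj => ⟨r j, hr j, Or.inr ⟨j, hj, hr j⟩⟩) x ?_ ?_
      · intro i hi
        have := hx' i
        rwa [if_pos hi] at this
      · intro i hi
        have := hx' i
        rwa [if_neg hi] at this
    obtain ⟨x, hx⟩ := (LinearMap.injective_iff_surjective.1 hL'inj) b
    have hx' : ∀ i, (if i ∈ U then x i else (Ls head tail σ *ᵥ x) i) = b i :=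
      fun i => congrFun hx i
    have hxU : ∀ i ∈ U, x i = b i := by
      intro i hi
      have := hx' i
      rwa [if_pos hi] at this
    have hker : Ls head tail σ *ᵥ x = 0 := by
      funext i
      by_cases hi : i ∈ U
      · rw [Ls_mulVec_apply head tail σ hht hσ]
        refine Finset.sum_eq_zero fun k _ => ?_
        by_cases hk : tail k = i
        · rw [if_pos hk]
          rcases hi with hi | ⟨j, hj, hij⟩
          · exact absurd hk (hi k)
          · subst hk
            have hh := (hSCCs j).2.1 k hij
            rw [hxU _ (Or.inr ⟨j, hj, hij⟩), hxU _ (Or.inr ⟨j, hj, hh⟩), hb2 j hj _ hij,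
              hb2 j hj _ hh, ← (hd j hj).2 k hh hij]
            rcases (hd j hj).1 _ hh with h | h <;> rw [h] <;> ring
        · rw [if_neg hk]
      · have h1 := hx' i
        rw [if_neg hi] at h1
        rw [h1]
        have hn1 : ¬ IsRootNode tail i := fun h => hi (Or.inl h)
        have hn2 : ¬ ∃ j, SCCBalanced head tail σ (S j) ∧ i ∈ S j := fun h => hi (Or.inr h)
        simp only [b]
        rw [if_neg hn1, dif_neg hn2]; rfl
    refine ⟨⟨x, by simpa [K] using hker⟩, ?_⟩
    funext ⟨i, hi⟩
    change x i = c ⟨i, hi⟩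
    have hc' : c ⟨i, hi⟩ = c' i := by simp only [c']; rw [dif_pos hi]
    rw [hc']
    have hi2 := hi
    rw [hBdef] at hi2
    rcases hi2 with h | ⟨j, hj, rfl⟩
    · rw [hxU i (Or.inl h), hb1 i h]
    · rw [hxU _ (Or.inr ⟨j, hj, hr j⟩), hb2 j hj _ (hr j)]
      rcases (hd j hj).1 _ (hr j) with h | h <;> rw [h] <;> ring
  have hfin : Module.finrank ℝ K = l₁ + l2SB := by
    rw [(LinearEquiv.ofBijective Φ ⟨hΦinj, hΦsurj⟩).finrank_eq, Module.finrank_fintype_fun_eq_card,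
      ← hBcard, ← Nat.card_eq_fintype_card]
    rfl
  have hrn := LinearMap.finrank_range_add_finrank_ker (Ls head tail σ).mulVecLin
  rw [Module.finrank_fintype_fun_eq_card, Fintype.card_fin] at hrn
  change (Ls head tail σ).rank + Module.finrank ℝ K = N at hrn
  omega
end

section
/- Let a signed digraph on N nodes be a directed spanning tree: M = N − 1, there is a node r from which every node is reachable, r is the tail of no edge, and every node other than r is the tail of exactly one edge. Then every complex eigenvalue of the signed edge Laplacian L_{e_s} ∈ ℝ^{(N−1)×(N−1)} has positive real part (in particular L_{e_s} has no zero eigenvalue), and for every symmetric positive definite Q ∈ ℝ^{(N−1)×(N−1)} there exists a symmetric positive definite P ∈ ℝ^{(N−1)×(N−1)} such that P·L_{e_s} + L_{e_s}ᵀ·P = Q. -/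
open Matrix

theorem nilp_of_wf {n : ℕ} (T : Matrix (Fin n) (Fin n) ℝ) (S : Fin n → Fin n → Prop)
    (hS : ∀ k, Acc S k) (hT : ∀ k l, T k l ≠ 0 → S l k) : ∃ m, T ^ (m + 1) = 0 := by
  have h : ∀ k, ∃ m, ∀ m' ≥ m, ∀ j, (T ^ m') k j = 0 := by
    intro k
    induction hS k with
    | intro k _ ih =>
      have h2 : ∀ l, ∃ m, S l k → ∀ m' ≥ m, ∀ j, (T ^ m') l j = 0 := by
        intro l
        by_cases hl : S l k
        · obtain ⟨m, hm⟩ := ih l hl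
          exact ⟨m, fun _ => hm⟩
        · exact ⟨0, fun h => absurd h hl⟩
      choose f hf using h2
      refine ⟨Finset.univ.sup f + 1, fun m' hm' j => ?_⟩
      obtain ⟨q, rfl⟩ : ∃ q, m' = q + 1 := ⟨m' - 1, by omega⟩
      rw [pow_succ', Matrix.mul_apply]
      refine Finset.sum_eq_zero fun l _ => ?_
      by_cases hl : T k l = 0
      · rw [hl, zero_mul]
      · have := Finset.le_sup (f := f) (Finset.mem_univ l)
        rw [hf l (hT k l hl) q (by omega) j, mul_zero]
  choose f hf using h
  refine ⟨Finset.univ.sup f, ?_⟩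
  ext k j
  have := Finset.le_sup (f := f) (Finset.mem_univ k)
  exact hf k _ (by omega) j

theorem lyap_of_nilp {n : ℕ} (T : Matrix (Fin n) (Fin n) ℝ) (m : ℕ) (hT : T ^ (m + 1) = 0)
    (Q : Matrix (Fin n) (Fin n) ℝ) (hQ : Q.PosDef) :
    ∃ P : Matrix (Fin n) (Fin n) ℝ, P.PosDef ∧ P * (1 + T) + (1 + T)ᵀ * P = Q := by
  have hu : IsUnit (2 + T) := by
    have h2 : IsUnit (2 : Matrix (Fin n) (Fin n) ℝ) := by
      have : (2 : Matrix (Fin n) (Fin n) ℝ) = algebraMap ℝ _ 2 :=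
        (map_ofNat (algebraMap ℝ (Matrix (Fin n) (Fin n) ℝ)) 2).symm
      rw [this]
      exact (IsUnit.mk0 (2 : ℝ) (by norm_num)).map _
    exact IsNilpotent.isUnit_add_left_of_commute ⟨m + 1, hT⟩ h2 (Commute.ofNat_right T 2)
  obtain ⟨U, hU⟩ := hu
  set S : Matrix (Fin n) (Fin n) ℝ := ↑U⁻¹ with hSdef
  have hS1 : S * (2 + T) = 1 := by rw [← hU]; exact U.inv_mul
  have hS2 : (2 + T) * S = 1 := by rw [← hU]; exact U.mul_inv
  have hcomm : Commute T S := by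
    have : Commute T (U : Matrix (Fin n) (Fin n) ℝ) := by
      rw [hU]; exact (Commute.ofNat_right T 2).add_right (Commute.refl T)
    exact this.units_inv_right
  have hC : (T * S) ^ (m + 1) = 0 := by rw [hcomm.mul_pow, hT, zero_mul]
  have hCS : (T * S) * (2 + T) = T := by rw [mul_assoc, hS1, mul_one]
  generalize T * S = C at hC hCS
  have hSinj : Function.Injective S.mulVec := by
    intro x y hxy
    have := congrArg (fun z => (2 + T) *ᵥ z) hxy
    simpa [Matrix.mulVec_mulVec, hS2] using this
  have hR : ((2 : ℝ) • (Sᵀ * Q * S)).PosDef := by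
    have := hQ.conjTranspose_mul_mul_same hSinj
    rw [Matrix.conjTranspose_eq_transpose_of_trivial] at this
    exact this.smul (by norm_num)
  have hRT : (2 + T)ᵀ * ((2 : ℝ) • (Sᵀ * Q * S)) * (2 + T) = (2 : ℝ) • Q := by
    have h1 : (2 + T)ᵀ * Sᵀ = 1 := by rw [← Matrix.transpose_mul, hS1, Matrix.transpose_one]
    rw [Matrix.mul_smul, Matrix.smul_mul]
    congr 1
    calc (2 + T)ᵀ * (Sᵀ * Q * S) * (2 + T) = ((2 + T)ᵀ * Sᵀ) * Q * (S * (2 + T)) := by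
          simp only [mul_assoc]
      _ = Q := by rw [h1, hS1, one_mul, mul_one]
  generalize (2 : ℝ) • (Sᵀ * Q * S) = R at hR hRT
  let P := ∑ j ∈ Finset.range (m + 1), (Cᵀ) ^ j * R * C ^ j
  have hP : P.PosDef := by
    have : P = (∑ j ∈ Finset.range m, (Cᵀ) ^ (j+1) * R * C ^ (j+1)) + R := by
      simp only [P]
      rw [Finset.sum_range_succ']
      simp
    rw [this]
    refine Matrix.PosDef.posSemidef_add (Matrix.posSemidef_sum _ fun j _ => ?_) hR
    have := hR.posSemidef.conjTranspose_mul_mul_same (C ^ (j + 1))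
    rwa [Matrix.conjTranspose_eq_transpose_of_trivial, Matrix.transpose_pow] at this
  have hStein : P - Cᵀ * P * C = R := by
    have : Cᵀ * P * C = ∑ j ∈ Finset.range (m + 1), (Cᵀ) ^ (j+1) * R * C ^ (j+1) := by
      simp only [P, Finset.mul_sum, Finset.sum_mul]
      refine Finset.sum_congr rfl fun j _ => ?_
      rw [pow_succ' (Cᵀ), pow_succ C]
      simp only [mul_assoc]
    rw [this, ← Finset.sum_sub_distrib]
    have := Finset.sum_range_sub' (fun j => (Cᵀ) ^ j * R * C ^ j) (m + 1)
    rw [this, hC]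
    simp
  refine ⟨P, hP, ?_⟩
  clear_value P
  have key : (2 + T)ᵀ * P * (2 + T) - Tᵀ * P * T = (2 : ℝ) • Q := by
    have h3 : Tᵀ * P * T = (2 + T)ᵀ * Cᵀ * P * (C * (2 + T)) := by
      rw [← Matrix.transpose_mul, hCS]
    rw [← hRT, ← hStein, h3]
    simp only [mul_sub, sub_mul, mul_assoc]
  have h2t : (2 : Matrix (Fin n) (Fin n) ℝ)ᵀ = 2 := by simp
  have e : (2 : ℝ) • (P * (1 + T) + (1 + T)ᵀ * P) = (2 : ℝ) • Q := by
    rw [← key, Matrix.transpose_add, Matrix.transpose_add, h2t, Matrix.transpose_one]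
    rw [two_smul]
    noncomm_ring
  exact smul_right_injective _ (two_ne_zero' ℝ) e

theorem lyapunov_spanning_tree {N M : ℕ}
    (head tail : Fin M → Fin N) (σ : Fin M → ℝ)
    (hht : ∀ k, head k ≠ tail k)
    (hinj : ∀ k k', head k = head k' → tail k = tail k' → k = k')
    (hσ : ∀ k, σ k = 1 ∨ σ k = -1)
    (hdss : ∀ k k', head k = tail k' → tail k = head k' → σ k = σ k')
    (hM : M + 1 = N)
    (r : Fin N) (hr : ∀ b, Reaches head tail r b)
    (hroot : ∀ k, tail k ≠ r)
    (huniq : ∀ i, i ≠ r → ∃! k, tail k = i) :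
    (∀ μ : ℂ, (((Les head tail σ).map ((↑) : ℝ → ℂ)).charpoly).IsRoot μ → 0 < μ.re) ∧
    ∀ Q : Matrix (Fin M) (Fin M) ℝ, Q.PosDef →
      ∃ P : Matrix (Fin M) (Fin M) ℝ, P.PosDef ∧
        P * Les head tail σ + (Les head tail σ)ᵀ * P = Q := by
  obtain ⟨T, hT⟩ : ∃ T, T = Les head tail σ - 1 := ⟨_, rfl⟩
  have hL : Les head tail σ = 1 + T := by rw [hT]; abel
  have htinj : ∀ k l, tail k = tail l → k = l := fun k l h =>
    (huniq (tail l) (hroot l)).unique h rfl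
  have hTkl : ∀ k l, T k l ≠ 0 → tail l = head k := by
    intro k l h
    by_contra hne
    apply h
    rw [hT, Matrix.sub_apply, Les, Matrix.mul_apply,
      Finset.sum_eq_single (tail l) (fun b _ hb => by simp [Ein, hb]) (by simp)]
    by_cases hkl : k = l
    · subst hkl
      rcases hσ k with hs | hs <;> simp [Es, Ein, hne, hs]
    · have : tail l ≠ tail k := fun h => hkl (htinj _ _ h).symm
      simp [Es, Ein, hne, this, hkl]
  have hacc : ∀ b, ∀ k, tail k = b → Acc (fun l k => tail l = head k) k := by
    intro b
    have hb : Relation.ReflTransGen (fun a b => ∃ k, head k = a ∧ tail k = b) r b := hr b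
    induction hb with
    | refl => intro k hk; exact absurd hk (hroot k)
    | tail _ hbc ih =>
      intro k hk
      obtain ⟨k0, h1, h2⟩ := hbc
      obtain rfl : k = k0 := htinj _ _ (hk.trans h2.symm)
      exact Acc.intro _ fun l hl => ih l (hl.trans h1)
  obtain ⟨m, hm⟩ := nilp_of_wf T _ (fun k => hacc _ k rfl) hTkl
  rw [hL]
  refine ⟨fun μ hμ => ?_, fun Q hQ => lyap_of_nilp T m hm Q hQ⟩
  have hμ1 : μ = 1 := by
    by_contra hne
    rw [Polynomial.IsRoot, Matrix.eval_charpoly] at hμ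
    have hn : (T.map ((↑) : ℝ → ℂ)) ^ (m + 1) = 0 := by
      have h := congrArg (Complex.ofRealHom.mapMatrix) hm
      rw [map_pow, map_zero] at h
      exact h
    have hu : IsUnit (algebraMap ℂ (Matrix (Fin M) (Fin M) ℂ) (μ - 1)) :=
      (IsUnit.mk0 _ (sub_ne_zero.2 hne)).map _
    have hu2 := IsNilpotent.isUnit_add_left_of_commute
      (IsNilpotent.neg ⟨m + 1, hn⟩) hu (Algebra.commutes' _ _).symm
    have e : algebraMap ℂ (Matrix (Fin M) (Fin M) ℂ) (μ - 1) + -(T.map ((↑) : ℝ → ℂ)) =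
        Matrix.scalar (Fin M) μ - (1 + T).map ((↑) : ℝ → ℂ) := by
      ext i j
      by_cases hij : i = j
      · subst hij
        simp [Matrix.algebraMap_matrix_apply]; ring
      · simp [Matrix.algebraMap_matrix_apply, hij]
    rw [e, Matrix.isUnit_iff_isUnit_det, hμ] at hu2
    exact not_isUnit_zero hu2
  rw [hμ1]; simp
end
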